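/- arXiv:1006.2488 — 15 statements merged into one kernel-verified Lean document; each statement's English description precedes it below -/
import Mathlib

section
/- Let $f : I \subseteq \mathbb{R} \to \mathbb{R}$ be twice differentiable on the interior $I^\circ$ of $I$, let $a, b \in I^\circ$ with $a < b$, and suppose $f''$ is integrable on $[a,b]$. Then for every $x \in [a,b]$: $\frac{1}{b-a}\int_a^b f(u)\,du - f(x) + \left(x - \frac{a+b}{2}\right) f'(x) = \frac{(x-a)^3}{2(b-a)} \int_0^1 t^2 f''(tx + (1-t)a)\,dt + \frac{(b-x)^3}{2(b-a)} \int_0^1 t^2 f''(tx + (1-t)b)\,dt$. -/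
open MeasureTheory Set intervalIntegral

theorem aux_identity (f f' f'' : ℝ → ℝ) (c x : ℝ)
    (hf' : ∀ y ∈ uIcc c x, HasDerivAt f (f' y) y)
    (hf'' : ∀ y ∈ uIcc c x, HasDerivAt f' (f'' y) y)
    (hint : IntervalIntegrable f'' MeasureTheory.volume c x) :
    (x - c) ^ 3 * (∫ t in (0:ℝ)..1, t ^ 2 * f'' (t * x + (1 - t) * c))
      = (x - c) ^ 2 * f' x - 2 * (x - c) * f x + 2 * ∫ u in c..x, f u := by
  have h1 := intervalIntegral.smul_integral_comp_mul_add (a := 0) (b := 1)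
    (fun u => (u - c) ^ 2 * f'' u) (x - c) c
  have h2 : (∫ t in (0:ℝ)..1, (fun u => (u - c) ^ 2 * f'' u) ((x - c) * t + c))
      = (x - c) ^ 2 * ∫ t in (0:ℝ)..1, t ^ 2 * f'' (t * x + (1 - t) * c) := by
    rw [← intervalIntegral.integral_const_mul]
    congr 1
    funext t
    have : (x - c) * t + c = t * x + (1 - t) * c := by ring
    simp only [this]
    ring
  rw [h2] at h1
  simp only [smul_eq_mul, mul_zero, zero_add, mul_one, sub_add_cancel] at h1
  have hfi : IntervalIntegrable f volume c x :=
    ContinuousOn.intervalIntegrable (HasDerivAt.continuousOn hf')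
  have hgi : IntervalIntegrable (fun u => (u - c) ^ 2 * f'' u) volume c x :=
    hint.continuousOn_mul (by fun_prop)
  have h3 := intervalIntegral.integral_eq_sub_of_hasDerivAt (a := c) (b := x)
    (f := fun u => (u - c) ^ 2 * f' u - 2 * (u - c) * f u)
    (f' := fun u => (u - c) ^ 2 * f'' u - 2 * f u)
    (by
      intro y hy
      have hd : HasDerivAt (fun u : ℝ => u - c) 1 y := (hasDerivAt_id y).sub_const c
      refine (((hd.pow 2).mul (hf'' y hy)).sub ((hd.const_mul 2).mul (hf' y hy))).congr_deriv ?_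
      simp only [Pi.pow_apply]
      push_cast
      ring)
    (hgi.sub (hfi.const_mul 2))
  rw [intervalIntegral.integral_sub hgi (hfi.const_mul 2),
    intervalIntegral.integral_const_mul] at h3
  simp only [sub_self] at h3
  linear_combination h1 + h3

theorem stmt0 (I : Set ℝ) (hI : Convex ℝ I) (f f' f'' : ℝ → ℝ) (a b : ℝ)
    (ha : a ∈ interior I) (hb : b ∈ interior I) (hab : a < b)
    (hf' : ∀ y ∈ interior I, HasDerivAt f (f' y) y)
    (hf'' : ∀ y ∈ interior I, HasDerivAt f' (f'' y) y)
    (hfint : IntervalIntegrable f'' MeasureTheory.volume a b) :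
    ∀ x ∈ Set.Icc a b,
      (1 / (b - a)) * (∫ u in a..b, f u) - f x + (x - (a + b) / 2) * f' x
        = (x - a) ^ 3 / (2 * (b - a)) * (∫ t in (0:ℝ)..1, t ^ 2 * f'' (t * x + (1 - t) * a))
          + (b - x) ^ 3 / (2 * (b - a)) * (∫ t in (0:ℝ)..1, t ^ 2 * f'' (t * x + (1 - t) * b)) := by
  intro x hx
  have hsub : Icc a b ⊆ interior I := hI.interior.ordConnected.out ha hb
  have hsa : uIcc a x ⊆ Icc a b := by
    rw [uIcc_of_le hx.1]; exact Icc_subset_Icc le_rfl hx.2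
  have hsb : uIcc b x ⊆ Icc a b := by
    rw [uIcc_of_ge hx.2]; exact Icc_subset_Icc hx.1 le_rfl
  have hab' : uIcc a b = Icc a b := uIcc_of_le hab.le
  have hA := aux_identity f f' f'' a x (fun y hy => hf' y (hsub (hsa hy)))
    (fun y hy => hf'' y (hsub (hsa hy))) (hfint.mono_set (by rw [hab']; exact hsa))
  have hB := aux_identity f f' f'' b x (fun y hy => hf' y (hsub (hsb hy)))
    (fun y hy => hf'' y (hsub (hsb hy))) (hfint.mono_set (by rw [hab']; exact hsb))
  have hc : ContinuousOn f (Icc a b) :=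
    HasDerivAt.continuousOn fun y hy => hf' y (hsub hy)
  have hi1 : IntervalIntegrable f volume a x := (hc.mono hsa).intervalIntegrable
  have hi2 : IntervalIntegrable f volume b x := (hc.mono hsb).intervalIntegrable
  have hadd := intervalIntegral.integral_add_adjacent_intervals hi1 hi2.symm
  rw [intervalIntegral.integral_symm b x] at hadd
  have hne : b - a ≠ 0 := sub_ne_zero.mpr hab.ne'
  rw [← hadd]
  generalize (∫ t in (0:ℝ)..1, t ^ 2 * f'' (t * x + (1 - t) * a)) = A at *
  generalize (∫ t in (0:ℝ)..1, t ^ 2 * f'' (t * x + (1 - t) * b)) = B at *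
  field_simp
  linear_combination hB - hA
end

section
/- Let $f : I \subset [0,\infty) \to \mathbb{R}$ be twice differentiable on the interior $I^\circ$ of $I$ with $f''$ integrable on $[a,b]$, where $a, b \in I^\circ$ and $a < b$. If $|f''|$ is $s$-convex in the second sense on $[a,b]$ for some fixed $s \in (0,1]$, then for every $x \in [a,b]$: $\left| \frac{1}{b-a}\int_a^b f(u)\,du - f(x) + \left(x - \frac{a+b}{2}\right) f'(x) \right| \le \frac{1}{2(b-a)} \Big\{ \Big[ \frac{|f''(x)|}{s+3} + \frac{2|f''(a)|}{(s+1)(s+2)(s+3)} \Big] (x-a)^3 + \Big[ \frac{|f''(x)|}{s+3} + \frac{2|f''(b)|}{(s+1)(s+2)(s+3)} \Big] (b-x)^3 \Big\}$. -/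
open MeasureTheory Set intervalIntegral

lemma beta_aux1 (s : ℝ) (hs : 0 < s) : ∫ t in (0:ℝ)..1, t ^ 2 * t ^ s = 1 / (s + 3) := by
  have h : ∫ t in (0:ℝ)..1, t ^ 2 * t ^ s = ∫ t in (0:ℝ)..1, t ^ (s + 2) := by
    apply intervalIntegral.integral_congr_ae
    refine Filter.Eventually.of_forall fun t ht => ?_
    rw [uIoc_of_le zero_le_one] at ht
    rw [Real.rpow_add ht.1, Real.rpow_two]; ring
  rw [h, integral_rpow (Or.inl (by linarith)), Real.one_rpow, Real.zero_rpow (by linarith)]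
  rw [sub_zero]; congr 1; ring

lemma beta_aux2 (s : ℝ) (hs : 0 < s) :
    ∫ t in (0:ℝ)..1, t ^ 2 * (1 - t) ^ s = 2 / ((s + 1) * (s + 2) * (s + 3)) := by
  have h0 : ∫ t in (0:ℝ)..1, t ^ 2 * (1 - t) ^ s = ∫ t in (0:ℝ)..1, (1 - t) ^ 2 * t ^ s := by
    have := intervalIntegral.integral_comp_sub_left
      (a := 0) (b := 1) (fun t : ℝ => (1 - t) ^ 2 * t ^ s) 1
    simpa using this
  have h : ∫ t in (0:ℝ)..1, (1 - t) ^ 2 * t ^ s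
      = ∫ t in (0:ℝ)..1, (t ^ s - 2 * t ^ (s + 1) + t ^ (s + 2)) := by
    apply intervalIntegral.integral_congr_ae
    refine Filter.Eventually.of_forall fun t ht => ?_
    rw [uIoc_of_le zero_le_one] at ht
    rw [Real.rpow_add ht.1, Real.rpow_add ht.1, Real.rpow_two, Real.rpow_one]; ring
  have i (r : ℝ) (hr : 0 < r) : IntervalIntegrable (fun t : ℝ => t ^ r) volume 0 1 :=
    intervalIntegral.intervalIntegrable_rpow' (by linarith)
  rw [h0, h, intervalIntegral.integral_add
      ((i _ hs).sub ((i (s + 1) (by linarith)).const_mul 2)) (i (s + 2) (by linarith)),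
    intervalIntegral.integral_sub (i _ hs) ((i (s + 1) (by linarith)).const_mul 2),
    intervalIntegral.integral_const_mul,
    integral_rpow (Or.inl (by linarith)), integral_rpow (Or.inl (by linarith)),
    integral_rpow (Or.inl (by linarith)), Real.one_rpow, Real.one_rpow, Real.one_rpow,
    Real.zero_rpow (by linarith), Real.zero_rpow (by linarith), Real.zero_rpow (by linarith)]
  have h1 : s + 1 ≠ 0 := by linarith
  have h2 : s + 2 ≠ 0 := by linarith
  have h3 : s + 3 ≠ 0 := by linarith
  have e1 : s + 1 + 1 = s + 2 := by ring
  have e2 : s + 2 + 1 = s + 3 := by ring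
  rw [e1, e2]
  field_simp
  ring

lemma half_ident (f f' f'' : ℝ → ℝ) (c x : ℝ)
    (hf' : ∀ y ∈ uIcc c x, HasDerivAt f (f' y) y)
    (hf'' : ∀ y ∈ uIcc c x, HasDerivAt f' (f'' y) y)
    (hint : IntervalIntegrable f'' volume c x) :
    ∫ u in c..x, (u - c) ^ 2 / 2 * f'' u
      = (x - c) ^ 2 / 2 * f' x - (x - c) * f x + ∫ u in c..x, f u := by
  have i1 : IntervalIntegrable f volume c x :=
    ContinuousOn.intervalIntegrable fun y hy => (hf' y hy).continuousAt.continuousWithinAt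
  have i2 : IntervalIntegrable (fun u => (u - c) ^ 2 / 2 * f'' u) volume c x :=
    hint.continuousOn_mul (by fun_prop)
  have key := intervalIntegral.integral_eq_sub_of_hasDerivAt
    (f := fun u => (u - c) ^ 2 / 2 * f' u - (u - c) * f u)
    (f' := fun u => (u - c) ^ 2 / 2 * f'' u - f u) (a := c) (b := x) (by
      intro y hy
      have d : HasDerivAt (fun u : ℝ => u - c) 1 y := (hasDerivAt_id y).sub_const c
      have := (((d.pow 2).div_const 2).mul (hf'' y hy)).sub (d.mul (hf' y hy))
      refine this.congr_deriv ?_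
      simp
      ring) (i2.sub i1)
  rw [intervalIntegral.integral_sub i2 i1] at key
  simp at key
  linarith

lemma half_bound (f'' : ℝ → ℝ) (c x s : ℝ) (hs : 0 < s)
    (hc : ∀ t ∈ Icc (0:ℝ) 1,
      |f'' (t * x + (1 - t) * c)| ≤ t ^ s * |f'' x| + (1 - t) ^ s * |f'' c|) :
    |∫ u in c..x, (u - c) ^ 2 / 2 * f'' u|
      ≤ 1 / 2 * ((|f'' x| / (s + 3) + 2 * |f'' c| / ((s + 1) * (s + 2) * (s + 3)))
        * |x - c| ^ 3) := by
  have sub := intervalIntegral.smul_integral_comp_add_mul (a := 0) (b := 1)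
    (fun u => (u - c) ^ 2 / 2 * f'' u) (x - c) c
  simp only [mul_zero, add_zero, mul_one, add_sub_cancel, smul_eq_mul] at sub
  rw [← sub, abs_mul]
  have j1 : IntervalIntegrable (fun t : ℝ => t ^ 2 * t ^ s) volume 0 1 := by
    apply Continuous.intervalIntegrable
    exact (continuous_pow 2).mul (Real.continuous_rpow_const hs.le)
  have j2 : IntervalIntegrable (fun t : ℝ => t ^ 2 * (1 - t) ^ s) volume 0 1 := by
    apply Continuous.intervalIntegrable
    exact (continuous_pow 2).mul
      ((Real.continuous_rpow_const hs.le).comp (continuous_const.sub continuous_id))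
  have hb := intervalIntegral.norm_integral_le_of_norm_le (μ := volume) (zero_le_one (α := ℝ))
    (f := fun t => (c + (x - c) * t - c) ^ 2 / 2 * f'' (c + (x - c) * t))
    (g := fun t => |x - c| ^ 2 / 2 * |f'' x| * (t ^ 2 * t ^ s)
        + |x - c| ^ 2 / 2 * |f'' c| * (t ^ 2 * (1 - t) ^ s))
    (Filter.Eventually.of_forall fun t ht => by
      have h := hc t ⟨ht.1.le, ht.2⟩
      have e : t * x + (1 - t) * c = c + (x - c) * t := by ring
      rw [e] at h
      rw [Real.norm_eq_abs, abs_mul, abs_of_nonneg (by positivity), sq_abs]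
      calc _ ≤ (c + (x - c) * t - c) ^ 2 / 2 * (t ^ s * |f'' x| + (1 - t) ^ s * |f'' c|) :=
            mul_le_mul_of_nonneg_left h (by positivity)
        _ = _ := by ring)
    ((j1.const_mul _).add (j2.const_mul _))
  rw [intervalIntegral.integral_add (j1.const_mul _) (j2.const_mul _),
    intervalIntegral.integral_const_mul, intervalIntegral.integral_const_mul,
    beta_aux1 s hs, beta_aux2 s hs, Real.norm_eq_abs] at hb
  refine (mul_le_mul_of_nonneg_left hb (abs_nonneg _)).trans (le_of_eq ?_)
  ring

theorem stmt1 (I : Set ℝ) (hI : Convex ℝ I) (hI0 : I ⊆ Set.Ici (0:ℝ)) (f f' f'' : ℝ → ℝ) (a b : ℝ)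
    (ha : a ∈ interior I) (hb : b ∈ interior I) (hab : a < b)
    (hf' : ∀ y ∈ interior I, HasDerivAt f (f' y) y)
    (hf'' : ∀ y ∈ interior I, HasDerivAt f' (f'' y) y)
    (hfint : IntervalIntegrable f'' MeasureTheory.volume a b)
    (s : ℝ) (hs : s ∈ Set.Ioc (0:ℝ) 1)
    (hconv : ∀ u ∈ Set.Icc a b, ∀ v ∈ Set.Icc a b, ∀ t ∈ Set.Icc (0:ℝ) 1,
      |f'' (t * u + (1 - t) * v)| ≤ t ^ s * |f'' u| + (1 - t) ^ s * |f'' v|) :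
    ∀ x ∈ Set.Icc a b,
      |(1 / (b - a)) * (∫ u in a..b, f u) - f x + (x - (a + b) / 2) * f' x|
        ≤ (1 / (2 * (b - a))) *
            ((|f'' x| / (s + 3) + 2 * |f'' a| / ((s + 1) * (s + 2) * (s + 3))) * (x - a) ^ 3
              + (|f'' x| / (s + 3) + 2 * |f'' b| / ((s + 1) * (s + 2) * (s + 3))) * (b - x) ^ 3) := by
  intro x hx
  have hsub : Icc a b ⊆ interior I := hI.interior.ordConnected.out ha hb
  have haI : a ∈ Icc a b := left_mem_Icc.2 hab.le
  have hbI : b ∈ Icc a b := right_mem_Icc.2 hab.le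
  have ua : uIcc a x ⊆ Icc a b := by
    rw [uIcc_of_le hx.1]; exact Icc_subset_Icc_right hx.2
  have ub : uIcc b x ⊆ Icc a b := by
    rw [uIcc_of_ge hx.2]; exact Icc_subset_Icc_left hx.1
  have hu : uIcc a b = Icc a b := uIcc_of_le hab.le
  have A := half_ident f f' f'' a x (fun y hy => hf' y (hsub (ua hy)))
    (fun y hy => hf'' y (hsub (ua hy))) (hfint.mono_set (hu ▸ ua))
  have B := half_ident f f' f'' b x (fun y hy => hf' y (hsub (ub hy)))
    (fun y hy => hf'' y (hsub (ub hy))) (hfint.mono_set (hu ▸ ub))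
  have A' := half_bound f'' a x s hs.1 (hconv x hx a haI)
  have B' := half_bound f'' b x s hs.1 (hconv x hx b hbI)
  rw [abs_of_nonneg (sub_nonneg.2 hx.1)] at A'
  rw [abs_sub_comm x b, abs_of_nonneg (sub_nonneg.2 hx.2)] at B'
  have hfi : ∀ c d, uIcc c d ⊆ Icc a b → IntervalIntegrable f volume c d := fun c d h =>
    ContinuousOn.intervalIntegrable fun y hy =>
      (hf' y (hsub (h hy))).continuousAt.continuousWithinAt
  have hadd := intervalIntegral.integral_interval_sub_left (hfi a b hu.le) (hfi a x ua)
  rw [intervalIntegral.integral_symm b x] at hadd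
  have hpos : 0 < b - a := sub_pos.2 hab
  have e : (1 / (b - a)) * (∫ u in a..b, f u) - f x + (x - (a + b) / 2) * f' x
      = (1 / (b - a)) * ((∫ u in a..x, (u - a) ^ 2 / 2 * f'' u)
        - ∫ u in b..x, (u - b) ^ 2 / 2 * f'' u) := by
    have : (∫ u in a..b, f u) = (∫ u in a..x, f u) - ∫ u in b..x, f u := by linarith
    rw [A, B, this]
    field_simp
    ring
  rw [e, abs_mul, abs_of_pos (by positivity : 0 < 1 / (b - a))]
  refine (mul_le_mul_of_nonneg_left ((abs_sub _ _).trans (add_le_add A' B'))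
    (by positivity)).trans (le_of_eq ?_)
  field_simp
end

section
/- Let $f : I \subset [0,\infty) \to \mathbb{R}$ be twice differentiable on the interior $I^\circ$ of $I$ with $f''$ integrable on $[a,b]$, where $a, b \in I^\circ$ and $a < b$, and suppose $|f''|$ is $s$-convex in the second sense on $[a,b]$ for some fixed $s \in (0,1]$. If $M > 0$ satisfies $|f''(u)| \le M$ for all $u \in [a,b]$, then for every $x \in [a,b]$: $\left| \frac{1}{b-a}\int_a^b f(u)\,du - f(x) + \left(x - \frac{a+b}{2}\right) f'(x) \right| \le 3M \cdot \frac{s^2 + 3s + 4}{(s+1)(s+2)(s+3)} \Big[ \frac{(b-a)^2}{24} + \frac{1}{2}\left(x - \frac{a+b}{2}\right)^2 \Big] \le \frac{M(b-a)^2}{2} \cdot \frac{s^2 + 3s + 4}{(s+1)(s+2)(s+3)}$. -/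
open MeasureTheory Set intervalIntegral

theorem aux_min (g g' g'' : ℝ → ℝ) (a b x : ℝ)
    (h1 : ∀ y ∈ Set.Icc a b, HasDerivAt g (g' y) y)
    (h2 : ∀ y ∈ Set.Icc a b, HasDerivAt g' (g'' y) y)
    (h3 : ∀ y ∈ Set.Icc a b, 0 ≤ g'' y) (hx : x ∈ Set.Icc a b) (h0 : g' x = 0) :
    ∀ u ∈ Set.Icc a b, g x ≤ g u := by
  have hmono : MonotoneOn g' (Set.Icc a b) := by
    apply monotoneOn_of_deriv_nonneg (convex_Icc a b)
    · exact fun y hy => (h2 y hy).continuousAt.continuousWithinAt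
    · exact fun y hy => (h2 y (interior_subset hy)).differentiableAt.differentiableWithinAt
    · intro y hy
      rw [(h2 y (interior_subset hy)).deriv]
      exact h3 y (interior_subset hy)
  intro u hu
  rcases lt_trichotomy u x with h | h | h
  · have hsub : Set.Icc u x ⊆ Set.Icc a b := Set.Icc_subset_Icc hu.1 hx.2
    obtain ⟨c, hc, hc'⟩ := exists_hasDerivAt_eq_slope g g' h
      (fun y hy => (h1 y (hsub hy)).continuousAt.continuousWithinAt)
      (fun y hy => h1 y (hsub (Set.Ioo_subset_Icc_self hy)))
    have := hmono (hsub (Set.Ioo_subset_Icc_self hc)) hx hc.2.le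
    rw [eq_div_iff (by linarith)] at hc'
    nlinarith
  · rw [h]
  · have hsub : Set.Icc x u ⊆ Set.Icc a b := Set.Icc_subset_Icc hx.1 hu.2
    obtain ⟨c, hc, hc'⟩ := exists_hasDerivAt_eq_slope g g' h
      (fun y hy => (h1 y (hsub hy)).continuousAt.continuousWithinAt)
      (fun y hy => h1 y (hsub (Set.Ioo_subset_Icc_self hy)))
    have := hmono hx (hsub (Set.Ioo_subset_Icc_self hc)) hc.1.le
    rw [eq_div_iff (by linarith)] at hc'
    nlinarith

theorem aux_taylor (f f' f'' : ℝ → ℝ) (a b x M e : ℝ)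
    (h1 : ∀ y ∈ Set.Icc a b, HasDerivAt f (f' y) y)
    (h2 : ∀ y ∈ Set.Icc a b, HasDerivAt f' (f'' y) y)
    (h3 : ∀ y ∈ Set.Icc a b, e * f'' y ≤ M) (hx : x ∈ Set.Icc a b) :
    ∀ u ∈ Set.Icc a b, e * (f u - f x - (u - x) * f' x) ≤ M / 2 * (u - x) ^ 2 := by
  intro u hu
  have := aux_min (fun u => M / 2 * (u - x) ^ 2 - e * (f u - f x - (u - x) * f' x))
    (fun u => M * (u - x) - e * (f' u - f' x)) (fun u => M - e * f'' u) a b x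
    (fun y hy => by
      have hd := (hasDerivAt_id' y).sub_const x
      refine HasDerivAt.congr_deriv (((hd.pow 2).const_mul (M / 2)).sub
        ((((h1 y hy).sub_const (f x)).sub (hd.mul_const (f' x))).const_mul e)) ?_
      norm_num
      ring)
    (fun y hy => by
      have hd := (hasDerivAt_id' y).sub_const x
      refine HasDerivAt.congr_deriv
        ((hd.const_mul M).sub (((h2 y hy).sub_const (f' x)).const_mul e)) ?_
      ring)
    (fun y hy => by linarith [h3 y hy]) hx (by simp) u hu
  simp at this
  linarith

theorem stmt2 (I : Set ℝ) (hI : Convex ℝ I) (hI0 : I ⊆ Set.Ici (0:ℝ)) (f f' f'' : ℝ → ℝ) (a b : ℝ)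
    (ha : a ∈ interior I) (hb : b ∈ interior I) (hab : a < b)
    (hf' : ∀ y ∈ interior I, HasDerivAt f (f' y) y)
    (hf'' : ∀ y ∈ interior I, HasDerivAt f' (f'' y) y)
    (hfint : IntervalIntegrable f'' MeasureTheory.volume a b)
    (s : ℝ) (hs : s ∈ Set.Ioc (0:ℝ) 1)
    (hconv : ∀ u ∈ Set.Icc a b, ∀ v ∈ Set.Icc a b, ∀ t ∈ Set.Icc (0:ℝ) 1,
      |f'' (t * u + (1 - t) * v)| ≤ t ^ s * |f'' u| + (1 - t) ^ s * |f'' v|)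
    (M : ℝ) (hM : 0 < M) (hbd : ∀ u ∈ Set.Icc a b, |f'' u| ≤ M) :
    ∀ x ∈ Set.Icc a b,
      |(1 / (b - a)) * (∫ u in a..b, f u) - f x + (x - (a + b) / 2) * f' x|
          ≤ 3 * M * ((s ^ 2 + 3 * s + 4) / ((s + 1) * (s + 2) * (s + 3))) *
              ((b - a) ^ 2 / 24 + (1 / 2) * (x - (a + b) / 2) ^ 2)
        ∧ 3 * M * ((s ^ 2 + 3 * s + 4) / ((s + 1) * (s + 2) * (s + 3))) *
              ((b - a) ^ 2 / 24 + (1 / 2) * (x - (a + b) / 2) ^ 2)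
          ≤ M * (b - a) ^ 2 / 2 * ((s ^ 2 + 3 * s + 4) / ((s + 1) * (s + 2) * (s + 3))) := by
  intro x hx
  obtain ⟨hs0, hs1⟩ := hs
  have hsub : Set.Icc a b ⊆ interior I := hI.interior.ordConnected.out ha hb
  have hC : 1 ≤ 3 * ((s ^ 2 + 3 * s + 4) / ((s + 1) * (s + 2) * (s + 3))) := by
    rw [← mul_div_assoc, le_div_iff₀ (by positivity)]
    nlinarith [mul_nonneg hs0.le (sub_nonneg.2 hs1), mul_nonneg (sq_nonneg s) (sub_nonneg.2 hs1)]
  set C := (s ^ 2 + 3 * s + 4) / ((s + 1) * (s + 2) * (s + 3)) with hCdef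
  have hba : 0 < b - a := sub_pos.2 hab
  constructor
  · have key : |(1 / (b - a)) * (∫ u in a..b, f u) - f x + (x - (a + b) / 2) * f' x|
        ≤ M * ((b - a) ^ 2 / 24 + (1 / 2) * (x - (a + b) / 2) ^ 2) := by
      have hfc : IntervalIntegrable f volume a b := by
        apply ContinuousOn.intervalIntegrable_of_Icc hab.le
        exact fun y hy => (hf' y (hsub hy)).continuousAt.continuousWithinAt
      have hlin : IntervalIntegrable (fun u => (u - x) * f' x) volume a b :=
        (by fun_prop : Continuous (fun u : ℝ => (u - x) * f' x)).intervalIntegrable a b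
      have hq : IntervalIntegrable (fun u => M / 2 * (u - x) ^ 2) volume a b :=
        (by fun_prop : Continuous (fun u : ℝ => M / 2 * (u - x) ^ 2)).intervalIntegrable a b
      have hfc' : IntervalIntegrable (fun u => f u - f x) volume a b :=
        hfc.sub intervalIntegrable_const
      have hR : IntervalIntegrable (fun u => f u - f x - (u - x) * f' x) volume a b :=
        hfc'.sub hlin
      have e1 : ∫ u in a..b, (f u - f x - (u - x) * f' x)
          = (∫ u in a..b, f u) - (b - a) * f x - (b - a) * ((a + b) / 2 - x) * f' x := by
        rw [intervalIntegral.integral_sub hfc' hlin,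
          intervalIntegral.integral_sub hfc intervalIntegrable_const,
          intervalIntegral.integral_mul_const,
          intervalIntegral.integral_comp_sub_right (fun u => u), integral_id,
          intervalIntegral.integral_const, smul_eq_mul]
        ring
      have e2 : ∫ u in a..b, M / 2 * (u - x) ^ 2
          = (b - a) * (M * ((b - a) ^ 2 / 24 + (1 / 2) * (x - (a + b) / 2) ^ 2)) := by
        rw [intervalIntegral.integral_const_mul,
          intervalIntegral.integral_comp_sub_right (fun u => u ^ 2), integral_pow]
        push_cast
        ring
      have b1 : ∀ e : ℝ, (∀ y ∈ Set.Icc a b, e * f'' y ≤ M) →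
          e * ∫ u in a..b, (f u - f x - (u - x) * f' x) ≤ ∫ u in a..b, M / 2 * (u - x) ^ 2 := by
        intro e he
        rw [← intervalIntegral.integral_const_mul]
        exact intervalIntegral.integral_mono_on hab.le (hR.const_mul e) hq
          (aux_taylor f f' f'' a b x M e (fun y hy => hf' y (hsub hy))
            (fun y hy => hf'' y (hsub hy)) he hx)
      have c1 := b1 1 (fun y hy => by linarith [(abs_le.1 (hbd y hy)).2])
      have c2 := b1 (-1) (fun y hy => by linarith [(abs_le.1 (hbd y hy)).1])
      rw [e1, e2] at c1 c2
      have e3 : (1 / (b - a)) * (∫ u in a..b, f u) - f x + (x - (a + b) / 2) * f' x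
          = ((∫ u in a..b, f u) - (b - a) * f x - (b - a) * ((a + b) / 2 - x) * f' x)
            / (b - a) := by
        field_simp
        ring
      rw [e3, abs_le]
      constructor
      · rw [le_div_iff₀ hba]
        linarith
      · rw [div_le_iff₀ hba]
        linarith
    refine key.trans ?_
    have hP : 0 ≤ M * ((b - a) ^ 2 / 24 + (1 / 2) * (x - (a + b) / 2) ^ 2) := by positivity
    nlinarith [mul_le_mul_of_nonneg_right hC hP]
  · have hC0 : 0 ≤ M * C := mul_nonneg hM.le (by linarith)
    have hx2 : (x - (a + b) / 2) ^ 2 ≤ (b - a) ^ 2 / 4 := by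
      nlinarith [mul_nonneg (sub_nonneg.2 hx.1) (sub_nonneg.2 hx.2)]
    nlinarith [mul_le_mul_of_nonneg_left hx2 hC0]
end

section
/- Let $f : I \subset [0,\infty) \to \mathbb{R}$ be twice differentiable on the interior $I^\circ$ of $I$ with $f''$ integrable on $[a,b]$, where $a, b \in I^\circ$ and $a < b$, and suppose $|f''|$ is $s$-convex in the second sense on $[a,b]$ for some fixed $s \in (0,1]$. If $M > 0$ satisfies $|f''(u)| \le M$ for all $u \in [a,b]$, then $\left| \frac{1}{b-a}\int_a^b f(u)\,du - f\!\left(\frac{a+b}{2}\right) \right| \le \frac{M(b-a)^2}{2} \cdot \frac{s^2 + 3s + 4}{(s+1)(s+2)(s+3)}$. -/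
open MeasureTheory Set intervalIntegral

theorem stmt3 (I : Set ℝ) (hI : Convex ℝ I) (hI0 : I ⊆ Set.Ici (0:ℝ)) (f f' f'' : ℝ → ℝ) (a b : ℝ)
    (ha : a ∈ interior I) (hb : b ∈ interior I) (hab : a < b)
    (hf' : ∀ y ∈ interior I, HasDerivAt f (f' y) y)
    (hf'' : ∀ y ∈ interior I, HasDerivAt f' (f'' y) y)
    (hfint : IntervalIntegrable f'' MeasureTheory.volume a b)
    (s : ℝ) (hs : s ∈ Set.Ioc (0:ℝ) 1)
    (hconv : ∀ u ∈ Set.Icc a b, ∀ v ∈ Set.Icc a b, ∀ t ∈ Set.Icc (0:ℝ) 1,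
      |f'' (t * u + (1 - t) * v)| ≤ t ^ s * |f'' u| + (1 - t) ^ s * |f'' v|)
    (M : ℝ) (hM : 0 < M) (hbd : ∀ u ∈ Set.Icc a b, |f'' u| ≤ M) :
    |(1 / (b - a)) * (∫ u in a..b, f u) - f ((a + b) / 2)|
      ≤ M * (b - a) ^ 2 / 2 * ((s ^ 2 + 3 * s + 4) / ((s + 1) * (s + 2) * (s + 3))) := by
  have hsub : Set.Icc a b ⊆ interior I := by
    have := hI.interior.ordConnected
    exact this.out ha hb
  obtain ⟨m, hm⟩ : ∃ m, m = (a + b) / 2 := ⟨_, rfl⟩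
  rw [← hm]
  have hmI : m ∈ Set.Icc a b := ⟨by linarith, by linarith⟩
  have h1 : ∀ y ∈ Set.Icc a b, |f' y - f' m| ≤ M * |y - m| := by
    intro y hy
    have := (convex_Icc a b).norm_image_sub_le_of_norm_hasDerivWithin_le (f := f') (f' := f'')
      (C := M) (fun x hx => (hf'' x (hsub hx)).hasDerivWithinAt)
      (fun x hx => by simpa using hbd x hx) hmI hy
    simpa using this
  have h2 : ∀ u ∈ Set.Icc a b, |f u - f m - f' m * (u - m)| ≤ M * (u - m) ^ 2 := by
    intro u hu
    have hs2 : Set.uIcc m u ⊆ Set.Icc a b := Set.ordConnected_Icc.uIcc_subset hmI hu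
    have := (convex_uIcc m u).norm_image_sub_le_of_norm_hasDerivWithin_le
      (f := fun y => f y - f' m * y) (f' := fun y => f' y - f' m)
      (C := M * |u - m|)
      (fun x hx => by
        have h := (hf' x (hsub (hs2 hx))).sub ((hasDerivAt_id x).const_mul (f' m))
        rw [mul_one] at h
        exact h.hasDerivWithinAt)
      (fun x hx => by
        rw [Real.norm_eq_abs]
        refine (h1 x (hs2 hx)).trans ?_
        exact mul_le_mul_of_nonneg_left (Set.abs_sub_left_of_mem_uIcc hx) hM.le)
      Set.left_mem_uIcc Set.right_mem_uIcc
    simp only [Real.norm_eq_abs] at this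
    calc |f u - f m - f' m * (u - m)| = |f u - f' m * u - (f m - f' m * m)| := by
          congr 1; ring
      _ ≤ M * |u - m| * |u - m| := this
      _ = M * (u - m) ^ 2 := by rw [mul_assoc, abs_mul_abs_self]; ring
  have hfc : ContinuousOn f (Set.uIcc a b) := by
    rw [Set.uIcc_of_le hab.le]
    exact fun x hx => (hf' x (hsub hx)).continuousAt.continuousWithinAt
  have hfi : IntervalIntegrable f volume a b := hfc.intervalIntegrable
  have hlin : ∫ u in a..b, (f m + f' m * (u - m)) = (b - a) * f m := by
    rw [intervalIntegral.integral_add (by simp) (Continuous.intervalIntegrable (by fun_prop) _ _)]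
    simp only [intervalIntegral.integral_const, intervalIntegral.integral_const_mul, smul_eq_mul]
    rw [intervalIntegral.integral_sub (by simp) (by simp)]
    simp only [integral_id, intervalIntegral.integral_const, smul_eq_mul]
    rw [hm]; ring
  have hsq : ∫ u in a..b, M * (u - m) ^ 2 = M * (b - a) ^ 3 / 12 := by
    rw [intervalIntegral.integral_const_mul,
      intervalIntegral.integral_comp_sub_right (fun x => x ^ 2) m, integral_pow, hm]
    push_cast
    ring
  have h3 : |∫ u in a..b, (f u - (f m + f' m * (u - m)))| ≤ ∫ u in a..b, M * (u - m) ^ 2 := by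
    have := intervalIntegral.norm_integral_le_of_norm_le (μ := volume) hab.le
      (f := fun u => f u - (f m + f' m * (u - m))) (g := fun u => M * (u - m) ^ 2)
      (Filter.Eventually.of_forall fun u hu => by
        have := h2 u (Set.Ioc_subset_Icc_self hu)
        rw [Real.norm_eq_abs, ← sub_sub]; exact this)
      (Continuous.intervalIntegrable (by fun_prop) _ _)
    simpa only [Real.norm_eq_abs] using this
  rw [intervalIntegral.integral_sub hfi (Continuous.intervalIntegrable (by fun_prop) _ _),
    hlin, hsq] at h3
  have hba : 0 < b - a := by linarith
  have h4 : (1 / (b - a)) * (∫ u in a..b, f u) - f m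
      = ((∫ u in a..b, f u) - (b - a) * f m) / (b - a) := by field_simp
  rw [h4, abs_div, abs_of_pos hba, div_le_iff₀ hba]
  refine h3.trans ?_
  obtain ⟨hs0, hs1⟩ := hs
  have h5 : 1 / 6 ≤ (s ^ 2 + 3 * s + 4) / ((s + 1) * (s + 2) * (s + 3)) := by
    rw [div_le_div_iff₀ (by norm_num) (by positivity)]
    nlinarith [mul_nonneg hs0.le (sub_nonneg.2 hs1), mul_nonneg (mul_nonneg hs0.le hs0.le) (sub_nonneg.2 hs1)]
  have h6 : 0 ≤ M * (b - a) ^ 3 := by positivity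
  nlinarith [mul_le_mul_of_nonneg_left h5 h6]
end

section
/- Let $f : I \subset [0,\infty) \to \mathbb{R}$ be twice differentiable on the interior $I^\circ$ of $I$ with $f''$ integrable on $[a,b]$, where $a, b \in I^\circ$ and $a < b$. Let $p, q > 1$ with $\frac{1}{p} + \frac{1}{q} = 1$, and suppose $|f''|^q$ is $s$-convex in the second sense on $[a,b]$ for some fixed $s \in (0,1]$. Then for every $x \in [a,b]$: $\left| \frac{1}{b-a}\int_a^b f(u)\,du - f(x) + \left(x - \frac{a+b}{2}\right) f'(x) \right| \le \frac{(x-a)^3}{2(b-a)} \left(\frac{1}{2p+1}\right)^{1/p} \left( \frac{|f''(x)|^q + |f''(a)|^q}{s+1} \right)^{1/q} + \frac{(b-x)^3}{2(b-a)} \left(\frac{1}{2p+1}\right)^{1/p} \left( \frac{|f''(x)|^q + |f''(b)|^q}{s+1} \right)^{1/q}$. -/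
open MeasureTheory Set intervalIntegral

lemma aux_holder (h : ℝ → ℝ) (p q s A B : ℝ) (hp : 1 < p) (hq : 1 < q) (hpq : 1 / p + 1 / q = 1)
    (hs : 0 < s) (hA : 0 ≤ A) (hB : 0 ≤ B) (hint : IntervalIntegrable h volume 0 1)
    (hh : ∀ t ∈ Icc (0:ℝ) 1, |h t| ^ q ≤ t ^ s * A + (1 - t) ^ s * B) :
    |∫ t in (0:ℝ)..1, t ^ 2 * h t| ≤
      (1 / (2 * p + 1)) ^ (1 / p) * ((A + B) / (s + 1)) ^ (1 / q) := by
  have hp0 : 0 < p := by linarith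
  have hq0 : 0 < q := by linarith
  have hpq' : p.HolderConjugate q := by
    rw [Real.holderConjugate_iff]
    exact ⟨hp, by simpa using hpq⟩
  have hbd : ∀ t ∈ Icc (0:ℝ) 1, |h t| ≤ (A + B) ^ (1 / q) := by
    intro t ht
    have h1 : |h t| ^ q ≤ A + B := by
      refine (hh t ht).trans ?_
      have e1 : t ^ s ≤ 1 := Real.rpow_le_one ht.1 ht.2 hs.le
      have e2 : (1 - t) ^ s ≤ 1 := Real.rpow_le_one (by linarith [ht.2]) (by linarith [ht.1]) hs.le
      nlinarith
    calc |h t| = (|h t| ^ q) ^ (1 / q) := by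
          rw [one_div, Real.rpow_rpow_inv (abs_nonneg _) hq0.ne']
      _ ≤ _ := Real.rpow_le_rpow (by positivity) h1 (by positivity)
  have hmeas : AEStronglyMeasurable h (volume.restrict (Ioc (0:ℝ) 1)) := hint.1.aestronglyMeasurable
  have m1 : MemLp (fun t : ℝ => t ^ 2) (ENNReal.ofReal p) (volume.restrict (Ioc (0:ℝ) 1)) := by
    refine MemLp.of_bound (by fun_prop) 1 ?_
    refine (ae_restrict_iff' measurableSet_Ioc).2 (ae_of_all _ fun t ht => ?_)
    rw [Real.norm_eq_abs, abs_of_nonneg (by positivity)]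
    nlinarith [ht.1, ht.2]
  have m2 : MemLp (fun t : ℝ => |h t|) (ENNReal.ofReal q) (volume.restrict (Ioc (0:ℝ) 1)) := by
    refine MemLp.of_bound hmeas.norm ((A + B) ^ (1 / q)) ?_
    refine (ae_restrict_iff' measurableSet_Ioc).2 (ae_of_all _ fun t ht => ?_)
    rw [Real.norm_eq_abs, abs_abs]
    exact hbd t ⟨ht.1.le, ht.2⟩
  have hol := integral_mul_le_Lp_mul_Lq_of_nonneg hpq' (ae_of_all _ fun t => by positivity)
    (ae_of_all _ fun t => abs_nonneg _) m1 m2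
  simp only [← intervalIntegral.integral_of_le (zero_le_one (α := ℝ))] at hol
  have i1 : ∫ t in (0:ℝ)..1, (t ^ 2) ^ p = 1 / (2 * p + 1) := by
    have : ∫ t in (0:ℝ)..1, (t ^ 2) ^ p = ∫ t in (0:ℝ)..1, t ^ (2 * p) := by
      refine intervalIntegral.integral_congr fun t ht => ?_
      rw [uIcc_of_le zero_le_one] at ht
      rw [Real.rpow_mul ht.1]
      norm_num
    rw [this, integral_rpow (Or.inl (by linarith))]
    rw [Real.one_rpow, Real.zero_rpow (by linarith), sub_zero]
  have is : ∫ t in (0:ℝ)..1, t ^ s = 1 / (s + 1) := by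
    rw [integral_rpow (Or.inl (by linarith))]
    rw [Real.one_rpow, Real.zero_rpow (by linarith), sub_zero]
  have is' : ∫ t in (0:ℝ)..1, (1 - t) ^ s = 1 / (s + 1) := by
    rw [intervalIntegral.integral_comp_sub_left (fun t : ℝ => t ^ s) 1]
    simpa using is
  have c1 : IntervalIntegrable (fun t : ℝ => t ^ s * A) volume 0 1 :=
    ((Real.continuous_rpow_const hs.le).mul continuous_const).intervalIntegrable _ _
  have c2 : IntervalIntegrable (fun t : ℝ => (1 - t) ^ s * B) volume 0 1 :=
    (((Real.continuous_rpow_const hs.le).comp (continuous_const.sub continuous_id)).mul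
      continuous_const).intervalIntegrable _ _
  have hqint : IntervalIntegrable (fun t : ℝ => |h t| ^ q) volume 0 1 := by
    refine (c1.add c2).mono_fun ?_ ?_
    · rw [uIoc_of_le zero_le_one]
      exact (hmeas.norm.aemeasurable.pow_const q).aestronglyMeasurable
    · refine (ae_restrict_iff' measurableSet_uIoc).2 (ae_of_all _ fun t ht => ?_)
      rw [uIoc_of_le zero_le_one] at ht
      have := hh t ⟨ht.1.le, ht.2⟩
      simp only [Real.norm_eq_abs]
      rw [abs_of_nonneg (by positivity)]
      exact this.trans (le_abs_self _)
  have i2 : ∫ t in (0:ℝ)..1, |h t| ^ q ≤ (A + B) / (s + 1) := by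
    calc _ ≤ ∫ t in (0:ℝ)..1, (t ^ s * A + (1 - t) ^ s * B) :=
          intervalIntegral.integral_mono_on zero_le_one hqint (c1.add c2) hh
      _ = _ := by
          rw [intervalIntegral.integral_add c1 c2, intervalIntegral.integral_mul_const,
            intervalIntegral.integral_mul_const, is, is']
          ring
  have n2 : 0 ≤ ∫ t in (0:ℝ)..1, |h t| ^ q :=
    intervalIntegral.integral_nonneg zero_le_one fun t _ => by positivity
  rw [i1] at hol
  calc _ ≤ ∫ t in (0:ℝ)..1, |t ^ 2 * h t| :=
        intervalIntegral.abs_integral_le_integral_abs zero_le_one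
    _ = ∫ t in (0:ℝ)..1, t ^ 2 * |h t| := by
        congr 1; ext t; rw [abs_mul, abs_of_nonneg (sq_nonneg t)]
    _ ≤ _ := hol
    _ ≤ _ := by gcongr

lemma aux_one (f f' f'' : ℝ → ℝ) (c x : ℝ)
    (hf' : ∀ y ∈ uIcc c x, HasDerivAt f (f' y) y)
    (hf'' : ∀ y ∈ uIcc c x, HasDerivAt f' (f'' y) y)
    (hfint : IntervalIntegrable f'' volume c x)
    (p q : ℝ) (hp : 1 < p) (hq : 1 < q) (hpq : 1 / p + 1 / q = 1)
    (s : ℝ) (hs : 0 < s)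
    (hconv : ∀ t ∈ Icc (0:ℝ) 1,
      |f'' (t * x + (1 - t) * c)| ^ q ≤ t ^ s * |f'' x| ^ q + (1 - t) ^ s * |f'' c| ^ q) :
    |2 * (∫ u in c..x, f u) + (x - c) ^ 2 * f' x - 2 * (x - c) * f x| ≤
      |x - c| ^ 3 * ((1 / (2 * p + 1)) ^ (1 / p) *
        ((|f'' x| ^ q + |f'' c| ^ q) / (s + 1)) ^ (1 / q)) := by
  rcases eq_or_ne x c with rfl | hne
  · simp
  have hfc : ContinuousOn f (uIcc c x) := fun y hy => (hf' y hy).continuousAt.continuousWithinAt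
  have hfi : IntervalIntegrable f volume c x := hfc.intervalIntegrable
  have j1 : IntervalIntegrable (fun u => (u - c) ^ 2 * f'' u) volume c x :=
    hfint.continuousOn_mul (by fun_prop)
  have key : ∫ u in c..x, ((u - c) ^ 2 * f'' u - 2 * f u) =
      ((x - c) ^ 2 * f' x - 2 * (x - c) * f x) - ((c - c) ^ 2 * f' c - 2 * (c - c) * f c) := by
    refine intervalIntegral.integral_eq_sub_of_hasDerivAt
      (f := fun u => (u - c) ^ 2 * f' u - 2 * (u - c) * f u) (fun u hu => ?_)
      (j1.sub (hfi.const_mul 2))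
    have d := (hasDerivAt_id u).sub_const c
    refine (((d.pow 2).mul (hf'' u hu)).sub ((d.const_mul 2).mul (hf' u hu))).congr_deriv ?_
    simp
    ring
  rw [intervalIntegral.integral_sub j1 (hfi.const_mul 2),
    intervalIntegral.integral_const_mul] at key
  have sub : ∫ u in c..x, (u - c) ^ 2 * f'' u =
      (x - c) ^ 3 * ∫ t in (0:ℝ)..1, t ^ 2 * f'' (t * x + (1 - t) * c) := by
    have := intervalIntegral.mul_integral_comp_mul_add (a := 0) (b := 1)
      (f := fun u => (u - c) ^ 2 * f'' u) (c := x - c) (d := c)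
    simp only [mul_zero, zero_add, mul_one, sub_add_cancel] at this
    rw [← this, ← intervalIntegral.integral_const_mul, ← intervalIntegral.integral_const_mul]
    congr 1; ext t
    rw [show (x - c) * t + c = t * x + (1 - t) * c by ring]
    ring
  have hint : IntervalIntegrable (fun t => f'' (t * x + (1 - t) * c)) volume 0 1 := by
    have h1 := (hfint.comp_add_right c).comp_mul_left (c := x - c)
    have e : (x - c) / (x - c) = 1 := div_self (sub_ne_zero.2 hne)
    simp only [sub_self, zero_div, e] at h1
    convert h1 using 3
    ring
  have hh := aux_holder _ p q s _ _ hp hq hpq hs (by positivity) (by positivity) hint hconv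
  have : 2 * (∫ u in c..x, f u) + (x - c) ^ 2 * f' x - 2 * (x - c) * f x =
      (x - c) ^ 3 * ∫ t in (0:ℝ)..1, t ^ 2 * f'' (t * x + (1 - t) * c) := by
    rw [← sub]; linarith
  rw [this, abs_mul, abs_pow]
  gcongr

theorem stmt4 (I : Set ℝ) (hI : Convex ℝ I) (hI0 : I ⊆ Set.Ici (0:ℝ)) (f f' f'' : ℝ → ℝ) (a b : ℝ)
    (ha : a ∈ interior I) (hb : b ∈ interior I) (hab : a < b)
    (hf' : ∀ y ∈ interior I, HasDerivAt f (f' y) y)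
    (hf'' : ∀ y ∈ interior I, HasDerivAt f' (f'' y) y)
    (hfint : IntervalIntegrable f'' MeasureTheory.volume a b)
    (p q : ℝ) (hp : 1 < p) (hq : 1 < q) (hpq : 1 / p + 1 / q = 1)
    (s : ℝ) (hs : s ∈ Set.Ioc (0:ℝ) 1)
    (hconv : ∀ u ∈ Set.Icc a b, ∀ v ∈ Set.Icc a b, ∀ t ∈ Set.Icc (0:ℝ) 1,
      |f'' (t * u + (1 - t) * v)| ^ q ≤ t ^ s * |f'' u| ^ q + (1 - t) ^ s * |f'' v| ^ q) :
    ∀ x ∈ Set.Icc a b,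
      |(1 / (b - a)) * (∫ u in a..b, f u) - f x + (x - (a + b) / 2) * f' x|
        ≤ (x - a) ^ 3 / (2 * (b - a)) * (1 / (2 * p + 1)) ^ (1 / p) *
            ((|f'' x| ^ q + |f'' a| ^ q) / (s + 1)) ^ (1 / q)
          + (b - x) ^ 3 / (2 * (b - a)) * (1 / (2 * p + 1)) ^ (1 / p) *
            ((|f'' x| ^ q + |f'' b| ^ q) / (s + 1)) ^ (1 / q) := by
  intro x hx
  have hsub : Icc a b ⊆ interior I := hI.interior.ordConnected.out ha hb
  have ha' : a ∈ Icc a b := ⟨le_rfl, hab.le⟩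
  have hb' : b ∈ Icc a b := ⟨hab.le, le_rfl⟩
  have s1 : uIcc a x ⊆ Icc a b := by rw [← uIcc_of_le hab.le] at *; exact uIcc_subset_uIcc ha' hx
  have s2 : uIcc b x ⊆ Icc a b := by rw [← uIcc_of_le hab.le] at *; exact uIcc_subset_uIcc hb' hx
  have t1 : uIcc a x ⊆ uIcc a b := by rwa [uIcc_of_le hab.le]
  have t2 : uIcc b x ⊆ uIcc a b := by rwa [uIcc_of_le hab.le]
  have k1 := aux_one f f' f'' a x (fun y hy => hf' y (hsub (s1 hy)))
    (fun y hy => hf'' y (hsub (s1 hy))) (hfint.mono_set t1) p q hp hq hpq s hs.1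
    (hconv x hx a ha')
  have k2 := aux_one f f' f'' b x (fun y hy => hf' y (hsub (s2 hy)))
    (fun y hy => hf'' y (hsub (s2 hy))) (hfint.mono_set t2) p q hp hq hpq s hs.1
    (hconv x hx b hb')
  have hfi : IntervalIntegrable f volume a b := by
    refine ContinuousOn.intervalIntegrable fun y hy => ?_
    rw [uIcc_of_le hab.le] at hy
    exact (hf' y (hsub hy)).continuousAt.continuousWithinAt
  have hadd := intervalIntegral.integral_add_adjacent_intervals (hfi.mono_set t1)
    (hfi.mono_set t2).symm
  rw [intervalIntegral.integral_symm b x] at hadd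
  rw [abs_of_nonneg (sub_nonneg.2 hx.1)] at k1
  rw [abs_of_nonpos (sub_nonpos.2 hx.2), neg_sub] at k2
  have hba : 0 < b - a := sub_pos.2 hab
  generalize (∫ u in a..x, f u) = J1 at *
  generalize (∫ u in b..x, f u) = J2 at *
  rw [← hadd]
  have e : (1 / (b - a)) * (J1 + -J2) - f x + (x - (a + b) / 2) * f' x =
      ((2 * J1 + (x - a) ^ 2 * f' x - 2 * (x - a) * f x) -
        (2 * J2 + (x - b) ^ 2 * f' x - 2 * (x - b) * f x)) / (2 * (b - a)) := by
    field_simp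
    ring
  rw [e, abs_div, abs_of_pos (show 0 < 2 * (b - a) by linarith)]
  calc _ ≤ _ := div_le_div_of_nonneg_right ((abs_sub _ _).trans (add_le_add k1 k2)) (by linarith)
    _ = _ := by ring
end

section
/- Let $f : I \subset [0,\infty) \to \mathbb{R}$ be twice differentiable on the interior $I^\circ$ of $I$ with $f''$ integrable on $[a,b]$, where $a, b \in I^\circ$ and $a < b$. Let $p, q > 1$ with $\frac{1}{p} + \frac{1}{q} = 1$, suppose $|f''|^q$ is $s$-convex in the second sense on $[a,b]$ for some fixed $s \in (0,1]$, and suppose $M > 0$ satisfies $|f''(u)| \le M$ for all $u \in [a,b]$. Then $\left| \frac{1}{b-a}\int_a^b f(u)\,du - f\!\left(\frac{a+b}{2}\right) \right| \le \frac{(b-a)^2}{8(2p+1)^{1/p}} \left(\frac{2}{s+1}\right)^{1/q} M$. -/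
open MeasureTheory Set intervalIntegral

theorem aux_taylor_s6 (f f' f'' : ℝ → ℝ) (a b c M : ℝ) (hc : c ∈ Set.Icc a b)
    (hf' : ∀ y ∈ Set.Icc a b, HasDerivAt f (f' y) y)
    (hf'' : ∀ y ∈ Set.Icc a b, HasDerivAt f' (f'' y) y)
    (hbd : ∀ u ∈ Set.Icc a b, |f'' u| ≤ M) (e : ℝ) (he : |e| = 1) (h : ℝ) (hh : 0 ≤ h)
    (hmem : ∀ t ∈ Set.Icc 0 h, c + e * t ∈ Set.Icc a b) :
    |f (c + e * h) - f c - f' c * (e * h)| ≤ M / 2 * h ^ 2 := by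
  have hlip : ∀ x ∈ Set.Icc a b, |f' x - f' c| ≤ M * |x - c| := by
    intro x hx
    have := (convex_Icc a b).norm_image_sub_le_of_norm_hasDerivWithin_le
      (f := f') (f' := f'') (C := M) (fun y hy => (hf'' y hy).hasDerivWithinAt)
      (fun y hy => hbd y hy) hc hx
    simpa [Real.norm_eq_abs] using this
  have hd : ∀ t ∈ Set.Icc 0 h, HasDerivAt (fun t => f (c + e * t) - f c - f' c * (e * t))
      (e * (f' (c + e * t) - f' c)) t := by
    intro t ht
    have h1 : HasDerivAt (fun t : ℝ => e * t) e t := by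
      simpa using (hasDerivAt_id t).const_mul e
    have h2 := (hf' _ (hmem t ht)).comp t (h1.const_add c)
    have h3 := (h2.sub_const (f c)).sub (h1.const_mul (f' c))
    exact h3.congr_deriv (by ring)
  have key := image_norm_le_of_norm_deriv_right_le_deriv_boundary
    (a := 0) (b := h) (f := fun t => f (c + e * t) - f c - f' c * (e * t))
    (f' := fun t => e * (f' (c + e * t) - f' c))
    (B := fun t => M / 2 * t ^ 2) (B' := fun t => M * t)
    (fun t ht => (hd t ht).continuousAt.continuousWithinAt)
    (fun t ht => (hd t ⟨ht.1, ht.2.le⟩).hasDerivWithinAt) (by simp)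
    (fun t => by
      have := (hasDerivAt_pow 2 t).const_mul (M / 2)
      exact this.congr_deriv (by push_cast; ring))
    (fun t ht => by
      have := hlip _ (hmem t ⟨ht.1, ht.2.le⟩)
      rw [Real.norm_eq_abs, abs_mul, he, one_mul]
      simpa [abs_mul, he, abs_of_nonneg ht.1] using this)
  have := key (x := h) ⟨hh, le_refl h⟩
  simpa [Real.norm_eq_abs] using this

theorem stmt6 (I : Set ℝ) (hI : Convex ℝ I) (hI0 : I ⊆ Set.Ici (0:ℝ)) (f f' f'' : ℝ → ℝ) (a b : ℝ)
    (ha : a ∈ interior I) (hb : b ∈ interior I) (hab : a < b)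
    (hf' : ∀ y ∈ interior I, HasDerivAt f (f' y) y)
    (hf'' : ∀ y ∈ interior I, HasDerivAt f' (f'' y) y)
    (hfint : IntervalIntegrable f'' MeasureTheory.volume a b)
    (p q : ℝ) (hp : 1 < p) (hq : 1 < q) (hpq : 1 / p + 1 / q = 1)
    (s : ℝ) (hs : s ∈ Set.Ioc (0:ℝ) 1)
    (hconv : ∀ u ∈ Set.Icc a b, ∀ v ∈ Set.Icc a b, ∀ t ∈ Set.Icc (0:ℝ) 1,
      |f'' (t * u + (1 - t) * v)| ^ q ≤ t ^ s * |f'' u| ^ q + (1 - t) ^ s * |f'' v| ^ q)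
    (M : ℝ) (hM : 0 < M) (hbd : ∀ u ∈ Set.Icc a b, |f'' u| ≤ M) :
    |(1 / (b - a)) * (∫ u in a..b, f u) - f ((a + b) / 2)|
      ≤ (b - a) ^ 2 / (8 * (2 * p + 1) ^ (1 / p)) * (2 / (s + 1)) ^ (1 / q) * M := by
  have hsub : Set.Icc a b ⊆ interior I := hI.interior.ordConnected.out ha hb
  have hcm : (a + b) / 2 ∈ Set.Icc a b := ⟨by linarith, by linarith⟩
  obtain ⟨c, hc⟩ : ∃ c, c = (a + b) / 2 := ⟨_, rfl⟩
  rw [← hc] at hcm ⊢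
  have htay : ∀ u ∈ Set.Icc a b, |f u - f c - f' c * (u - c)| ≤ M / 2 * (u - c) ^ 2 := by
    intro u hu
    have base := aux_taylor_s6 f f' f'' a b c M hcm (fun y hy => hf' y (hsub hy))
      (fun y hy => hf'' y (hsub hy)) hbd
    rcases le_total c u with h | h
    · have := base 1 (by simp) (u - c) (by linarith)
        (fun t ht => ⟨by linarith [ht.1, hcm.1], by linarith [ht.2, hu.2]⟩)
      simpa using this
    · have := base (-1) (by simp) (c - u) (by linarith)
        (fun t ht => ⟨by linarith [ht.2, hu.1], by linarith [ht.1, hcm.2]⟩)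
      have e1 : c + -1 * (c - u) = u := by ring
      have e2 : -1 * (c - u) = u - c := by ring
      have e3 : (c - u) ^ 2 = (u - c) ^ 2 := by ring
      rwa [e1, e2, e3] at this
  have hfc : ContinuousOn f (Set.uIcc a b) := by
    rw [Set.uIcc_of_le hab.le]
    exact fun y hy => (hf' y (hsub hy)).continuousAt.continuousWithinAt
  have hfi : IntervalIntegrable f volume a b := hfc.intervalIntegrable
  have hlin : ∫ u in a..b, (f c + f' c * (u - c)) = (b - a) * f c := by
    rw [intervalIntegral.integral_add (by simp) (Continuous.intervalIntegrable (by fun_prop) _ _),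
      intervalIntegral.integral_const_mul, intervalIntegral.integral_sub
        (Continuous.intervalIntegrable (by fun_prop) _ _) (by simp)]
    simp only [intervalIntegral.integral_const, integral_id, smul_eq_mul]
    rw [hc]; ring
  have hquad : ∫ u in a..b, M / 2 * (u - c) ^ 2 = M * (b - a) ^ 3 / 24 := by
    rw [intervalIntegral.integral_const_mul,
      intervalIntegral.integral_comp_sub_right (fun x => x ^ 2) c, integral_pow]
    rw [hc]; push_cast; ring
  have hint : |(∫ u in a..b, f u) - (b - a) * f c| ≤ M * (b - a) ^ 3 / 24 := by
    rw [← hlin, ← hquad, ← intervalIntegral.integral_sub hfi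
      (Continuous.intervalIntegrable (by fun_prop) _ _), ← Real.norm_eq_abs]
    refine intervalIntegral.norm_integral_le_of_norm_le hab.le ?_
      (Continuous.intervalIntegrable (by fun_prop) _ _)
    refine Filter.Eventually.of_forall fun u hu => ?_
    rw [Real.norm_eq_abs, ← sub_sub]
    exact htay u ⟨hu.1.le, hu.2⟩
  have hba : 0 < b - a := by linarith
  have h24 : |(1 / (b - a)) * (∫ u in a..b, f u) - f c| ≤ (b - a) ^ 2 / 24 * M := by
    have : (1 / (b - a)) * (∫ u in a..b, f u) - f c
        = ((∫ u in a..b, f u) - (b - a) * f c) / (b - a) := by field_simp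
    rw [this, abs_div, abs_of_pos hba, div_le_iff₀ hba]
    calc _ ≤ _ := hint
      _ = _ := by ring
  refine h24.trans ?_
  have hp0 : 0 < p := by linarith
  have hb3 : (2 * p + 1) ^ (1 / p) ≤ 3 := by
    have h1 : 2 * p + 1 ≤ (3 : ℝ) ^ p := by
      have := one_add_mul_self_le_rpow_one_add (s := 2) (by norm_num) hp.le
      norm_num at this
      linarith
    calc (2 * p + 1) ^ (1 / p) ≤ ((3 : ℝ) ^ p) ^ (1 / p) :=
          Real.rpow_le_rpow (by linarith) h1 (by positivity)
      _ = 3 := by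
          rw [← Real.rpow_mul (by norm_num), mul_one_div_cancel hp0.ne', Real.rpow_one]
  have hs1 : 1 ≤ (2 / (s + 1)) ^ (1 / q) := by
    refine Real.one_le_rpow ?_ (by positivity)
    rw [le_div_iff₀ (by linarith [hs.1])]
    linarith [hs.2]
  have hpos : 0 < (2 * p + 1) ^ (1 / p) := by positivity
  have hA : (b - a) ^ 2 / 24 ≤ (b - a) ^ 2 / (8 * (2 * p + 1) ^ (1 / p)) :=
    div_le_div_of_nonneg_left (by positivity) (by positivity) (by linarith)
  refine mul_le_mul_of_nonneg_right ?_ hM.le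
  exact hA.trans (le_mul_of_one_le_right (by positivity) hs1)
end

section
/- Let $f : I \subset [0,\infty) \to \mathbb{R}$ be twice differentiable on the interior $I^\circ$ of $I$ with $f''$ integrable on $[a,b]$, where $a, b \in I^\circ$ and $a < b$. Let $p, q > 1$ with $\frac{1}{p} + \frac{1}{q} = 1$, suppose $|f''|^q$ is $s$-convex in the second sense on $[a,b]$ for some fixed $s \in (0,1]$, and suppose $M > 0$ satisfies $|f''(u)| \le M$ for all $u \in [a,b]$. Then the perturbed trapezoid inequality holds: $\left| \int_a^b f(u)\,du - \frac{b-a}{2}\big[f(a) + f(b)\big] + \frac{(b-a)^2}{4}\big(f'(b) - f'(a)\big) \right| \le \frac{(b-a)^3}{2(2p+1)^{1/p}} \left(\frac{2}{s+1}\right)^{1/q} M$. -/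
open MeasureTheory Set intervalIntegral

theorem stmt7 (I : Set ℝ) (hI : Convex ℝ I) (hI0 : I ⊆ Set.Ici (0:ℝ)) (f f' f'' : ℝ → ℝ) (a b : ℝ)
    (ha : a ∈ interior I) (hb : b ∈ interior I) (hab : a < b)
    (hf' : ∀ y ∈ interior I, HasDerivAt f (f' y) y)
    (hf'' : ∀ y ∈ interior I, HasDerivAt f' (f'' y) y)
    (hfint : IntervalIntegrable f'' MeasureTheory.volume a b)
    (p q : ℝ) (hp : 1 < p) (hq : 1 < q) (hpq : 1 / p + 1 / q = 1)
    (s : ℝ) (hs : s ∈ Set.Ioc (0:ℝ) 1)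
    (hconv : ∀ u ∈ Set.Icc a b, ∀ v ∈ Set.Icc a b, ∀ t ∈ Set.Icc (0:ℝ) 1,
      |f'' (t * u + (1 - t) * v)| ^ q ≤ t ^ s * |f'' u| ^ q + (1 - t) ^ s * |f'' v| ^ q)
    (M : ℝ) (hM : 0 < M) (hbd : ∀ u ∈ Set.Icc a b, |f'' u| ≤ M) :
    |(∫ u in a..b, f u) - (b - a) / 2 * (f a + f b) + (b - a) ^ 2 / 4 * (f' b - f' a)|
      ≤ (b - a) ^ 3 / (2 * (2 * p + 1) ^ (1 / p)) * (2 / (s + 1)) ^ (1 / q) * M := by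
  have hsub : Set.uIcc a b ⊆ interior I := by
    rw [Set.uIcc_of_le hab.le]
    exact hI.interior.ordConnected.out ha hb
  have hfc : ContinuousOn f (Set.uIcc a b) := fun x hx =>
    (hf' x (hsub hx)).continuousAt.continuousWithinAt
  have hfi : IntervalIntegrable f volume a b := hfc.intervalIntegrable
  have hKc : Continuous (fun u : ℝ => ((u - a) ^ 2 + (b - u) ^ 2) / 4) := by fun_prop
  have hKi : IntervalIntegrable (fun u => ((u - a) ^ 2 + (b - u) ^ 2) / 4 * f'' u) volume a b :=
    hfint.continuousOn_mul hKc.continuousOn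
  have hd : ∀ x ∈ Set.uIcc a b, HasDerivAt
      (fun u => ((u - a) ^ 2 + (b - u) ^ 2) / 4 * f' u - ((u - a) - (b - u)) / 2 * f u)
      (((x - a) ^ 2 + (b - x) ^ 2) / 4 * f'' x - f x) x := by
    intro x hx
    have h1 : HasDerivAt (fun u : ℝ => u - a) 1 x := (hasDerivAt_id x).sub_const a
    have h2 : HasDerivAt (fun u : ℝ => b - u) (-1) x := (hasDerivAt_id x).const_sub b
    have h3 := (((h1.pow 2).add (h2.pow 2)).div_const 4).mul (hf'' x (hsub hx))
    have h4 := ((h1.sub h2).div_const 2).mul (hf' x (hsub hx))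
    refine (h3.sub h4).congr_deriv ?_
    simp
    ring
  have hF := intervalIntegral.integral_eq_sub_of_hasDerivAt hd (hKi.sub hfi)
  rw [intervalIntegral.integral_sub hKi hfi] at hF
  have hid : (∫ u in a..b, f u) - (b - a) / 2 * (f a + f b) + (b - a) ^ 2 / 4 * (f' b - f' a)
      = ∫ u in a..b, ((u - a) ^ 2 + (b - u) ^ 2) / 4 * f'' u := by
    linear_combination -hF
  have hKM : ∫ u in a..b, ((u - a) ^ 2 + (b - u) ^ 2) / 4 * M = (b - a) ^ 3 / 6 * M := by
    have hd2 : ∀ x ∈ Set.uIcc a b, HasDerivAt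
        (fun u => ((u - a) ^ 3 - (b - u) ^ 3) / 12 * M)
        (((x - a) ^ 2 + (b - x) ^ 2) / 4 * M) x := by
      intro x _
      have h1 : HasDerivAt (fun u : ℝ => u - a) 1 x := (hasDerivAt_id x).sub_const a
      have h2 : HasDerivAt (fun u : ℝ => b - u) (-1) x := (hasDerivAt_id x).const_sub b
      refine ((((h1.pow 3).sub (h2.pow 3)).div_const 12).mul_const M).congr_deriv ?_
      norm_num only [Nat.cast_ofNat]
      ring
    rw [intervalIntegral.integral_eq_sub_of_hasDerivAt hd2
      ((hKc.mul continuous_const).intervalIntegrable a b)]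
    ring
  have hle : |∫ u in a..b, ((u - a) ^ 2 + (b - u) ^ 2) / 4 * f'' u| ≤ (b - a) ^ 3 / 6 * M := by
    rw [← hKM, ← Real.norm_eq_abs]
    refine intervalIntegral.norm_integral_le_of_norm_le hab.le
      (Filter.Eventually.of_forall fun t ht => ?_)
      ((hKc.mul continuous_const).intervalIntegrable a b)
    have hK0 : 0 ≤ ((t - a) ^ 2 + (b - t) ^ 2) / 4 := by positivity
    rw [Real.norm_eq_abs, abs_mul, abs_of_nonneg hK0]
    exact mul_le_mul_of_nonneg_left (hbd t ⟨ht.1.le, ht.2⟩) hK0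
  rw [hid]
  refine hle.trans (mul_le_mul_of_nonneg_right ?_ hM.le)
  have hp0 : 0 < p := by linarith
  have hA : (2 * p + 1) ^ (1 / p) ≤ 3 := by
    have hB := one_add_mul_self_le_rpow_one_add (s := 2) (by norm_num) hp.le
    calc (2 * p + 1) ^ (1 / p) ≤ ((3 : ℝ) ^ p) ^ (1 / p) := by
          apply Real.rpow_le_rpow (by positivity) _ (by positivity)
          norm_num at hB
          linarith
      _ = 3 := by
          rw [← Real.rpow_mul (by norm_num), mul_one_div_cancel hp0.ne', Real.rpow_one]
  have hA0 : 0 < (2 * p + 1) ^ (1 / p) := by positivity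
  have hC : 1 ≤ (2 / (s + 1)) ^ (1 / q) := by
    apply Real.one_le_rpow
    · rw [le_div_iff₀ (by linarith [hs.1])]
      linarith [hs.2]
    · positivity
  have hba : 0 ≤ (b - a) ^ 3 := pow_nonneg (by linarith) 3
  calc (b - a) ^ 3 / 6 ≤ (b - a) ^ 3 / (2 * (2 * p + 1) ^ (1 / p)) :=
        div_le_div_of_nonneg_left hba (by positivity) (by linarith)
    _ ≤ _ := le_mul_of_one_le_right (by positivity) hC
end

section
/- Let $f : I \subset [0,\infty) \to \mathbb{R}$ be twice differentiable on the interior $I^\circ$ of $I$ with $f''$ integrable on $[a,b]$, where $a, b \in I^\circ$ and $a < b$. Let $q \ge 1$ and suppose $|f''|^q$ is $s$-convex in the second sense on $[a,b]$ for some fixed $s \in (0,1]$. Then for every $x \in [a,b]$: $\left| \frac{1}{b-a}\int_a^b f(u)\,du - f(x) + \left(x - \frac{a+b}{2}\right) f'(x) \right| \le \frac{(x-a)^3}{2(b-a)} \left(\frac{1}{3}\right)^{1 - 1/q} \left( \frac{|f''(x)|^q}{s+3} + \frac{2|f''(a)|^q}{(s+1)(s+2)(s+3)} \right)^{1/q}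 + \frac{(b-x)^3}{2(b-a)} \left(\frac{1}{3}\right)^{1 - 1/q} \left( \frac{|f''(x)|^q}{s+3} + \frac{2|f''(b)|^q}{(s+1)(s+2)(s+3)} \right)^{1/q}$. -/
open MeasureTheory Set intervalIntegral

lemma aux_int {g : ℝ → ℝ} {c x : ℝ} (h : IntervalIntegrable g volume c x) :
    IntervalIntegrable (fun t : ℝ => g (c + (x - c) * t)) volume 0 1 := by
  by_cases hx : x - c = 0
  · simp [hx]
  · have h1 := (h.comp_add_left c).comp_mul_left (c := x - c)
    simpa [hx] using h1

lemma aux_ident {f f' f'' : ℝ → ℝ} {c x : ℝ}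
    (hf' : ∀ y ∈ uIcc c x, HasDerivAt f (f' y) y)
    (hf'' : ∀ y ∈ uIcc c x, HasDerivAt f' (f'' y) y)
    (hint : IntervalIntegrable f'' volume c x) :
    (x - c) ^ 3 * (∫ t in (0:ℝ)..1, t ^ 2 * f'' (c + (x - c) * t)) =
      (x - c) ^ 2 * f' x - 2 * (x - c) * f x + 2 * ∫ u in c..x, f u := by
  have hmem : ∀ t ∈ uIcc (0:ℝ) 1, c + (x - c) * t ∈ uIcc c x := by
    intro t ht
    rw [uIcc_of_le zero_le_one] at ht
    rw [mem_uIcc]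
    rcases le_total c x with h | h
    · left; constructor <;> nlinarith [ht.1, ht.2]
    · right; constructor <;> nlinarith [ht.1, ht.2]
  have hg := aux_int hint
  have hg2 : IntervalIntegrable (fun t : ℝ => t ^ 2 * f'' (c + (x - c) * t)) volume 0 1 :=
    hg.continuousOn_mul (by fun_prop)
  have hfc : IntervalIntegrable f volume c x :=
    ContinuousOn.intervalIntegrable fun y hy => (hf' y hy).continuousAt.continuousWithinAt
  have hf0 := aux_int hfc
  have key : ∫ t in (0:ℝ)..1, ((x - c) ^ 2 * (t ^ 2 * f'' (c + (x - c) * t))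
      - 2 * f (c + (x - c) * t)) = (x - c) * f' x - 2 * f x := by
    rw [integral_eq_sub_of_hasDerivAt
      (f := fun t => t ^ 2 * (x - c) * f' (c + (x - c) * t) - 2 * t * f (c + (x - c) * t))]
    · simp
    · intro t ht
      have hl : HasDerivAt (fun t : ℝ => c + (x - c) * t) (x - c) t := by
        simpa using ((hasDerivAt_id t).const_mul (x - c)).const_add c
      have h1 := (hf' _ (hmem t ht)).comp t hl
      have h2 := (hf'' _ (hmem t ht)).comp t hl
      have h3 := ((((hasDerivAt_id t).pow 2).mul_const (x - c)).mul h2).sub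
        (((hasDerivAt_id t).const_mul 2).mul h1)
      refine HasDerivAt.congr_deriv (f := fun t => t ^ 2 * (x - c) * f' (c + (x - c) * t) - 2 * t * f (c + (x - c) * t)) h3 ?_
      simp
      ring
    · exact (hg2.const_mul _).sub (hf0.const_mul _)
  rw [integral_sub (hg2.const_mul _) (hf0.const_mul _), intervalIntegral.integral_const_mul,
    intervalIntegral.integral_const_mul] at key
  have h4 : (x - c) * ∫ t in (0:ℝ)..1, f (c + (x - c) * t) = ∫ u in c..x, f u := by
    rw [intervalIntegral.mul_integral_comp_add_mul]; simp
  rw [← h4]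
  linear_combination (x - c) * key

lemma aux_bound {g : ℝ → ℝ} {A B q s : ℝ} (hA : 0 ≤ A) (hB : 0 ≤ B) (hq : 1 ≤ q) (hs : 0 < s)
    (hint : IntervalIntegrable g volume 0 1)
    (hg : ∀ t ∈ Icc (0:ℝ) 1, |g t| ^ q ≤ t ^ s * A + (1 - t) ^ s * B) :
    |∫ t in (0:ℝ)..1, t ^ 2 * g t| ≤ ((1:ℝ) / 3) ^ (1 - 1 / q) *
      (A / (s + 3) + 2 * B / ((s + 1) * (s + 2) * (s + 3))) ^ (1 / q) := by
  have hq0 : 0 < q := by linarith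
  set K := A / (s + 3) + 2 * B / ((s + 1) * (s + 2) * (s + 3)) with hK
  have hK0 : 0 ≤ K := by positivity
  rcases hK0.eq_or_lt with h0 | hKpos
  · have h1 : 0 ≤ A / (s + 3) := by positivity
    have h2 : 0 ≤ 2 * B / ((s + 1) * (s + 2) * (s + 3)) := by positivity
    have hA0 : A = 0 := by
      have : A / (s + 3) = 0 := by linarith
      rcases div_eq_zero_iff.1 this with h | h <;> linarith
    have hB0 : B = 0 := by
      have : 2 * B / ((s + 1) * (s + 2) * (s + 3)) = 0 := by linarith
      have h3 : (s + 1) * (s + 2) * (s + 3) ≠ 0 := by positivity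
      rcases div_eq_zero_iff.1 this with h | h
      · linarith
      · exact absurd h h3
    have hz : ∫ t in (0:ℝ)..1, t ^ 2 * g t = 0 := by
      rw [integral_congr (g := fun _ => (0:ℝ))]
      · simp
      · intro t ht
        rw [uIcc_of_le zero_le_one] at ht
        have h5 := hg t ht
        rw [hA0, hB0] at h5
        have h6 : |g t| ^ q = 0 := le_antisymm (by simpa using h5) (by positivity)
        have h7 := (Real.rpow_eq_zero (abs_nonneg _) hq0.ne').1 h6
        simp [abs_eq_zero.1 h7]
    rw [hz]; simp; positivity
  · set M := (3 * K) ^ (1 / q) with hM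
    have hMpos : 0 < M := by positivity
    have hMq : M ^ q = 3 * K := by
      rw [hM, ← Real.rpow_mul (by positivity)]; field_simp; simp
    have hR : ((1:ℝ) / 3) ^ (1 - 1 / q) * K ^ (1 / q) = M / 3 := by
      rw [hM, Real.mul_rpow (by norm_num) hK0, Real.rpow_sub (by norm_num), Real.rpow_one,
        one_div, Real.inv_rpow (by norm_num)]
      field_simp
    rw [hR]
    have hpt : ∀ t ∈ Icc (0:ℝ) 1, |g t| ≤
        M * (1 - 1 / q) + M / (3 * K * q) * (t ^ s * A + (1 - t) ^ s * B) := by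
      intro t ht
      have h1 := one_add_mul_self_le_rpow_one_add (s := |g t| / M - 1) (p := q)
        (by have : 0 ≤ |g t| / M := by positivity
            linarith) hq
      rw [add_sub_cancel, Real.div_rpow (abs_nonneg _) hMpos.le, hMq] at h1
      have h2 := hg t ht
      have h3 : |g t| ^ q / (3 * K) ≤ (t ^ s * A + (1 - t) ^ s * B) / (3 * K) := by gcongr
      have h4 : M / q * (1 + q * (|g t| / M - 1)) ≤ M / q * ((t ^ s * A + (1 - t) ^ s * B) / (3 * K)) := by
        gcongr; linarith
      have e1 : M / q * (1 + q * (|g t| / M - 1)) = |g t| - M * (1 - 1 / q) := by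
        field_simp; ring
      have e2 : M / q * ((t ^ s * A + (1 - t) ^ s * B) / (3 * K)) =
        M / (3 * K * q) * (t ^ s * A + (1 - t) ^ s * B) := by
        field_simp
      linarith
    have c1 : Continuous fun t : ℝ => t ^ s := Real.continuous_rpow_const hs.le
    have c2 : Continuous fun t : ℝ => (1 - t) ^ s := c1.comp (continuous_const.sub continuous_id)
    have i1 : ∫ t in (0:ℝ)..1, t ^ 2 * t ^ s = 1 / (s + 3) := by
      rw [integral_congr (g := fun t : ℝ => t ^ (s + 2))]
      · rw [integral_rpow (by left; linarith), Real.one_rpow, Real.zero_rpow (by linarith)]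
        ring_nf
      · intro t ht
        rw [uIcc_of_le zero_le_one] at ht
        simp only
        rw [Real.rpow_add_of_nonneg ht.1 hs.le (by norm_num)]
        norm_num; ring
    have i2 : ∫ t in (0:ℝ)..1, t ^ 2 * (1 - t) ^ s = 2 / ((s + 1) * (s + 2) * (s + 3)) := by
      have := integral_comp_sub_left (fun t : ℝ => (1 - t) ^ 2 * t ^ s) (a := 0) (b := 1) 1
      simp only [sub_sub_cancel, sub_zero, sub_self] at this
      rw [this, integral_congr (g := fun t : ℝ => t ^ s - 2 * t ^ (s + 1) + t ^ 2 * t ^ s)]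
      · have c3 : Continuous fun t : ℝ => t ^ (s + 1) := Real.continuous_rpow_const (by linarith)
        rw [intervalIntegral.integral_add, intervalIntegral.integral_sub, i1,
          intervalIntegral.integral_const_mul,
          integral_rpow (by left; linarith), integral_rpow (by left; linarith), Real.one_rpow,
          Real.one_rpow, Real.zero_rpow (by linarith), Real.zero_rpow (by linarith)]
        · have : s + 1 + 1 ≠ 0 := by positivity
          field_simp; ring
        all_goals exact Continuous.intervalIntegrable (by fun_prop) _ _
      · intro t ht
        rw [uIcc_of_le zero_le_one] at ht
        simp only
        rw [Real.rpow_add_of_nonneg ht.1 hs.le (by norm_num)]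
        norm_num; ring
    have hg2 : IntervalIntegrable (fun t : ℝ => t ^ 2 * g t) volume 0 1 :=
      hint.continuousOn_mul (by fun_prop)
    calc |∫ t in (0:ℝ)..1, t ^ 2 * g t| ≤ ∫ t in (0:ℝ)..1, |t ^ 2 * g t| :=
          abs_integral_le_integral_abs zero_le_one
      _ ≤ ∫ t in (0:ℝ)..1, (M * (1 - 1 / q) * t ^ 2 + (M / (3 * K * q) * A * (t ^ 2 * t ^ s) +
            M / (3 * K * q) * B * (t ^ 2 * (1 - t) ^ s))) := by
          refine integral_mono_on zero_le_one hg2.abs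
            (Continuous.intervalIntegrable (by fun_prop) _ _) ?_
          intro t ht
          rw [abs_mul, abs_of_nonneg (sq_nonneg t)]
          have := mul_le_mul_of_nonneg_left (hpt t ht) (sq_nonneg t)
          linarith
      _ = M / 3 := by
          rw [intervalIntegral.integral_add, intervalIntegral.integral_add,
            intervalIntegral.integral_const_mul, intervalIntegral.integral_const_mul,
            intervalIntegral.integral_const_mul, i1, i2, integral_pow]
          · have : M / (3 * K * q) * A * (1 / (s + 3)) +
              M / (3 * K * q) * B * (2 / ((s + 1) * (s + 2) * (s + 3))) = M / (3 * K * q) * K := by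
              conv_rhs => rw [hK]
              rw [← hK]; ring
            rw [this]
            norm_num
            field_simp
            ring
          all_goals exact Continuous.intervalIntegrable (by fun_prop) _ _


theorem stmt8 (I : Set ℝ) (hI : Convex ℝ I) (hI0 : I ⊆ Set.Ici (0:ℝ)) (f f' f'' : ℝ → ℝ) (a b : ℝ)
    (ha : a ∈ interior I) (hb : b ∈ interior I) (hab : a < b)
    (hf' : ∀ y ∈ interior I, HasDerivAt f (f' y) y)
    (hf'' : ∀ y ∈ interior I, HasDerivAt f' (f'' y) y)
    (hfint : IntervalIntegrable f'' MeasureTheory.volume a b)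
    (q : ℝ) (hq : 1 ≤ q)
    (s : ℝ) (hs : s ∈ Set.Ioc (0:ℝ) 1)
    (hconv : ∀ u ∈ Set.Icc a b, ∀ v ∈ Set.Icc a b, ∀ t ∈ Set.Icc (0:ℝ) 1,
      |f'' (t * u + (1 - t) * v)| ^ q ≤ t ^ s * |f'' u| ^ q + (1 - t) ^ s * |f'' v| ^ q) :
    ∀ x ∈ Set.Icc a b,
      |(1 / (b - a)) * (∫ u in a..b, f u) - f x + (x - (a + b) / 2) * f' x|
        ≤ (x - a) ^ 3 / (2 * (b - a)) * ((1:ℝ) / 3) ^ (1 - 1 / q) *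
            (|f'' x| ^ q / (s + 3) + 2 * |f'' a| ^ q / ((s + 1) * (s + 2) * (s + 3))) ^ (1 / q)
          + (b - x) ^ 3 / (2 * (b - a)) * ((1:ℝ) / 3) ^ (1 - 1 / q) *
            (|f'' x| ^ q / (s + 3) + 2 * |f'' b| ^ q / ((s + 1) * (s + 2) * (s + 3))) ^ (1 / q) := by

  intro x hx
  have hsub : Icc a b ⊆ interior I := hI.interior.ordConnected.out ha hb
  have hama : a ∈ Icc a b := left_mem_Icc.2 hab.le
  have hbmb : b ∈ Icc a b := right_mem_Icc.2 hab.le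
  have hii : ∀ c ∈ Icc a b, uIcc c x ⊆ Icc a b := fun c hc => uIcc_subset_Icc hc hx
  have hint : ∀ c ∈ Icc a b, IntervalIntegrable f'' volume c x := fun c hc =>
    hfint.mono_set (by rw [uIcc_of_le hab.le]; exact hii c hc)
  have hid : ∀ c ∈ Icc a b, _ := fun c hc => aux_ident (c := c) (x := x)
    (fun y hy => hf' y (hsub (hii c hc hy))) (fun y hy => hf'' y (hsub (hii c hc hy))) (hint c hc)
  have hbd : ∀ c ∈ Icc a b, _ := fun c hc => aux_bound
    (g := fun t => f'' (c + (x - c) * t)) (A := |f'' x| ^ q) (B := |f'' c| ^ q) (q := q) (s := s)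
    (by positivity) (by positivity) hq hs.1 (aux_int (hint c hc)) (fun t ht => by
      have := hconv x hx c hc t ht
      rwa [show t * x + (1 - t) * c = c + (x - c) * t by ring] at this)
  have ida := hid a hama
  have idb := hid b hbmb
  have bda := hbd a hama
  have bdb := hbd b hbmb
  have hfi : ∀ c ∈ Icc a b, IntervalIntegrable f volume c x := fun c hc =>
    ContinuousOn.intervalIntegrable fun y hy =>
      (hf' y (hsub (hii c hc hy))).continuousAt.continuousWithinAt
  have hadd := integral_add_adjacent_intervals (hfi a hama) (hfi b hbmb).symm
  rw [integral_symm b x] at hadd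
  set Ja := ∫ t in (0:ℝ)..1, t ^ 2 * f'' (a + (x - a) * t)
  set Jb := ∫ t in (0:ℝ)..1, t ^ 2 * f'' (b + (x - b) * t)
  have hba : 0 < b - a := by linarith
  have hxa : 0 ≤ x - a := by linarith [hx.1]
  have hbx : 0 ≤ b - x := by linarith [hx.2]
  have e : (1 / (b - a)) * (∫ u in a..b, f u) - f x + (x - (a + b) / 2) * f' x =
      (x - a) ^ 3 / (2 * (b - a)) * Ja + (b - x) ^ 3 / (2 * (b - a)) * Jb := by
    rw [← hadd]
    field_simp
    linear_combination -ida + idb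
  rw [e]
  refine (abs_add_le _ _).trans ?_
  rw [abs_mul, abs_mul, abs_of_nonneg (by positivity : 0 ≤ (x - a) ^ 3 / (2 * (b - a))),
    abs_of_nonneg (by positivity : 0 ≤ (b - x) ^ 3 / (2 * (b - a))),
    mul_assoc ((x - a) ^ 3 / (2 * (b - a))), mul_assoc ((b - x) ^ 3 / (2 * (b - a)))]
  exact add_le_add (mul_le_mul_of_nonneg_left bda (by positivity))
    (mul_le_mul_of_nonneg_left bdb (by positivity))
end

section
/- Let $f : I \subset [0,\infty) \to \mathbb{R}$ be twice differentiable on the interior $I^\circ$ of $I$ with $f''$ integrable on $[a,b]$, where $a, b \in I^\circ$ and $a < b$. Let $q \ge 1$, suppose $|f''|^q$ is $s$-convex in the second sense on $[a,b]$ for some fixed $s \in (0,1]$, and suppose $M > 0$ satisfies $|f''(u)| \le M$ for all $u \in [a,b]$. Then for every $x \in [a,b]$: $\left| \frac{1}{b-a}\int_a^b f(u)\,du - f(x) + \left(x - \frac{a+b}{2}\right) f'(x) \right| \le M \left( \frac{3(s^2 + 3s + 4)}{(s+1)(s+2)(s+3)} \right)^{1/q} \Big[ \frac{(b-a)^2}{24}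 + \frac{1}{2}\left(x - \frac{a+b}{2}\right)^2 \Big]$. -/
open MeasureTheory Set intervalIntegral

theorem aux_tangent (F F' F'' : ℝ → ℝ) (a b : ℝ)
    (h1 : ∀ y ∈ Icc a b, HasDerivAt F (F' y) y)
    (h2 : ∀ y ∈ Icc a b, HasDerivAt F' (F'' y) y)
    (h3 : ∀ y ∈ Icc a b, 0 ≤ F'' y) (x u : ℝ) (hx : x ∈ Icc a b) (hu : u ∈ Icc a b) :
    F x + F' x * (u - x) ≤ F u := by
  have mono : ∀ c ∈ Icc a b, ∀ d ∈ Icc a b, c < d → F' c ≤ F' d := by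
    intro c hc d hd hcd
    have hsub : ∀ y ∈ Icc c d, y ∈ Icc a b := fun y hy => ⟨hc.1.trans hy.1, hy.2.trans hd.2⟩
    obtain ⟨e, he, hs⟩ := exists_hasDerivAt_eq_slope F' F'' hcd
      (fun y hy => (h2 y (hsub y hy)).continuousAt.continuousWithinAt)
      (fun y hy => h2 y (hsub y (Ioo_subset_Icc_self hy)))
    have h := h3 e (hsub e (Ioo_subset_Icc_self he))
    rw [eq_div_iff (by linarith)] at hs
    nlinarith
  have mvt : ∀ c ∈ Icc a b, ∀ d ∈ Icc a b, c < d → ∃ e ∈ Ioo c d, e ∈ Icc a b ∧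
      F' e * (d - c) = F d - F c := by
    intro c hc d hd hcd
    have hsub : ∀ y ∈ Icc c d, y ∈ Icc a b := fun y hy => ⟨hc.1.trans hy.1, hy.2.trans hd.2⟩
    obtain ⟨e, he, hs⟩ := exists_hasDerivAt_eq_slope F F' hcd
      (fun y hy => (h1 y (hsub y hy)).continuousAt.continuousWithinAt)
      (fun y hy => h1 y (hsub y (Ioo_subset_Icc_self hy)))
    rw [eq_div_iff (by linarith)] at hs
    exact ⟨e, he, hsub e (Ioo_subset_Icc_self he), hs⟩
  rcases lt_trichotomy x u with h | h | h
  · obtain ⟨e, he, he', hs⟩ := mvt x hx u hu h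
    have := mono x hx e he' he.1
    nlinarith
  · subst h; simp
  · obtain ⟨e, he, he', hs⟩ := mvt u hu x hx h
    have := mono e he' x hx he.2
    nlinarith

theorem stmt9 (I : Set ℝ) (hI : Convex ℝ I) (hI0 : I ⊆ Set.Ici (0:ℝ)) (f f' f'' : ℝ → ℝ) (a b : ℝ)
    (ha : a ∈ interior I) (hb : b ∈ interior I) (hab : a < b)
    (hf' : ∀ y ∈ interior I, HasDerivAt f (f' y) y)
    (hf'' : ∀ y ∈ interior I, HasDerivAt f' (f'' y) y)
    (hfint : IntervalIntegrable f'' MeasureTheory.volume a b)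
    (q : ℝ) (hq : 1 ≤ q)
    (s : ℝ) (hs : s ∈ Set.Ioc (0:ℝ) 1)
    (hconv : ∀ u ∈ Set.Icc a b, ∀ v ∈ Set.Icc a b, ∀ t ∈ Set.Icc (0:ℝ) 1,
      |f'' (t * u + (1 - t) * v)| ^ q ≤ t ^ s * |f'' u| ^ q + (1 - t) ^ s * |f'' v| ^ q)
    (M : ℝ) (hM : 0 < M) (hbd : ∀ u ∈ Set.Icc a b, |f'' u| ≤ M) :
    ∀ x ∈ Set.Icc a b,
      |(1 / (b - a)) * (∫ u in a..b, f u) - f x + (x - (a + b) / 2) * f' x|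
        ≤ M * (3 * (s ^ 2 + 3 * s + 4) / ((s + 1) * (s + 2) * (s + 3))) ^ (1 / q) *
            ((b - a) ^ 2 / 24 + (1 / 2) * (x - (a + b) / 2) ^ 2) := by
  intro x hx
  obtain ⟨hs0, hs1⟩ := hs
  have hsub : ∀ y ∈ Icc a b, y ∈ interior I := fun y hy => hI.interior.ordConnected.out ha hb hy
  -- the constant is at least one
  have hC : 1 ≤ (3 * (s ^ 2 + 3 * s + 4) / ((s + 1) * (s + 2) * (s + 3))) ^ (1 / q) := by
    apply Real.one_le_rpow
    · rw [le_div_iff₀ (by positivity)]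
      have h2 : s ^ 2 ≤ 1 := by nlinarith
      have h3 : s ^ 3 ≤ 1 := by nlinarith
      nlinarith
    · positivity
  set C := (3 * (s ^ 2 + 3 * s + 4) / ((s + 1) * (s + 2) * (s + 3))) ^ (1 / q) with hCdef
  -- Taylor bounds
  have hlo : ∀ u ∈ Icc a b, f x + f' x * (u - x) - M / 2 * (u - x) ^ 2 ≤ f u := by
    intro u hu
    have := aux_tangent (fun y => f y + M / 2 * y ^ 2) (fun y => f' y + M * y)
      (fun y => f'' y + M) a b
      (fun y hy => by
        have h := (hf' y (hsub y hy)).add ((hasDerivAt_pow 2 y).const_mul (M / 2))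
        exact h.congr_deriv (by push_cast; ring))
      (fun y hy => by
        have h := (hf'' y (hsub y hy)).add ((hasDerivAt_id y).const_mul M)
        exact h.congr_deriv (by ring))
      (fun y hy => by have := abs_le.1 (hbd y hy); linarith) x u hx hu
    nlinarith
  have hhi : ∀ u ∈ Icc a b, f u ≤ f x + f' x * (u - x) + M / 2 * (u - x) ^ 2 := by
    intro u hu
    have := aux_tangent (fun y => M / 2 * y ^ 2 - f y) (fun y => M * y - f' y)
      (fun y => M - f'' y) a b
      (fun y hy => by
        have h := ((hasDerivAt_pow 2 y).const_mul (M / 2)).sub (hf' y (hsub y hy))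
        exact h.congr_deriv (by push_cast; ring))
      (fun y hy => by
        have h := ((hasDerivAt_id y).const_mul M).sub (hf'' y (hsub y hy))
        exact h.congr_deriv (by ring))
      (fun y hy => by have := abs_le.1 (hbd y hy); linarith) x u hx hu
    nlinarith
  have hfi : IntervalIntegrable f volume a b := by
    apply ContinuousOn.intervalIntegrable
    rw [uIcc_of_le hab.le]
    exact fun y hy => (hf' y (hsub y hy)).continuousAt.continuousWithinAt
  have hquad : ∀ k : ℝ, ∫ u in a..b, (f x + f' x * (u - x) + k * (u - x) ^ 2) =
      (b - a) * (f x - (x - (a + b) / 2) * f' x +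
        2 * k * ((b - a) ^ 2 / 24 + (1 / 2) * (x - (a + b) / 2) ^ 2)) := by
    intro k
    rw [integral_eq_sub_of_hasDerivAt
      (f := fun u => f x * u + f' x / 2 * (u - x) ^ 2 + k / 3 * (u - x) ^ 3)]
    · ring
    · intro u _
      have h0 := (hasDerivAt_id u).sub_const x
      have h := (((hasDerivAt_id u).const_mul (f x)).add ((h0.pow 2).const_mul (f' x / 2))).add
        ((h0.pow 3).const_mul (k / 3))
      exact h.congr_deriv (by simp; ring)
    · exact Continuous.intervalIntegrable (by fun_prop) _ _
  have hci : ∀ k : ℝ, IntervalIntegrable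
      (fun u => f x + f' x * (u - x) + k * (u - x) ^ 2) volume a b :=
    fun k => Continuous.intervalIntegrable (by fun_prop) _ _
  have i1 := integral_mono_on hab.le (hci (-(M / 2))) hfi
    (fun u hu => by have := hlo u hu; linarith)
  have i2 := integral_mono_on hab.le hfi (hci (M / 2)) hhi
  rw [hquad] at i1 i2
  have hba : 0 < b - a := by linarith
  set J := ∫ u in a..b, f u with hJ
  set K := (b - a) ^ 2 / 24 + (1 / 2) * (x - (a + b) / 2) ^ 2 with hK
  have hK0 : 0 ≤ K := by positivity
  have j1 := (le_div_iff₀' hba).2 i1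
  have j2 := (div_le_iff₀' hba).2 i2
  have hJe : 1 / (b - a) * J = J / (b - a) := by ring
  have hMK : M * K ≤ M * C * K := by
    have : 0 ≤ M * K := by positivity
    nlinarith
  rw [hJe]
  refine le_trans (abs_le.2 ⟨?_, ?_⟩) hMK <;> nlinarith
end

section
/- Let $f : I \subset [0,\infty) \to \mathbb{R}$ be twice differentiable on the interior $I^\circ$ of $I$ with $f''$ integrable on $[a,b]$, where $a, b \in I^\circ$ and $a < b$. Let $q \ge 1$, suppose $|f''|^q$ is $s$-convex in the second sense on $[a,b]$ for some fixed $s \in (0,1]$, and suppose $M > 0$ satisfies $|f''(u)| \le M$ for all $u \in [a,b]$. Then $\left| \frac{1}{b-a}\int_a^b f(u)\,du - f\!\left(\frac{a+b}{2}\right) \right| \le M \left( \frac{3(s^2 + 3s + 4)}{(s+1)(s+2)(s+3)} \right)^{1/q} \frac{(b-a)^2}{24}$. -/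
open MeasureTheory Set intervalIntegral

/-- Tangent line inequality from a nonnegative second derivative. -/
lemma tangent_aux (h h' h'' : ℝ → ℝ) (a b : ℝ)
    (h1 : ∀ y ∈ Icc a b, HasDerivAt h (h' y) y)
    (h2 : ∀ y ∈ Icc a b, HasDerivAt h' (h'' y) y)
    (h3 : ∀ y ∈ Icc a b, 0 ≤ h'' y) (c u : ℝ) (hc : c ∈ Icc a b) (hu : u ∈ Icc a b) :
    h c + h' c * (u - c) ≤ h u := by
  have mvt : ∀ (g g' : ℝ → ℝ), (∀ y ∈ Icc a b, HasDerivAt g (g' y) y) →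
      ∀ x ∈ Icc a b, ∀ y ∈ Icc a b, x < y → ∃ z ∈ Ioo x y, g y - g x = g' z * (y - x) := by
    intro g g' hg x hx y hy hxy
    obtain ⟨z, hz, e⟩ := exists_hasDerivAt_eq_slope g g' hxy
      (fun t ht => (hg t ⟨hx.1.trans ht.1, ht.2.trans hy.2⟩).continuousAt.continuousWithinAt)
      (fun t ht => hg t ⟨hx.1.trans ht.1.le, ht.2.le.trans hy.2⟩)
    refine ⟨z, hz, ?_⟩
    rw [e, div_mul_cancel₀ _ (sub_pos.2 hxy).ne']
  have mono : ∀ x ∈ Icc a b, ∀ y ∈ Icc a b, x < y → h' x ≤ h' y := by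
    intro x hx y hy hxy
    obtain ⟨z, hz, e⟩ := mvt h' h'' h2 x hx y hy hxy
    have := mul_nonneg (h3 z ⟨hx.1.trans hz.1.le, hz.2.le.trans hy.2⟩) (sub_pos.2 hxy).le
    linarith
  rcases lt_trichotomy c u with hcu | hcu | hcu
  · obtain ⟨z, hz, e⟩ := mvt h h' h1 c hc u hu hcu
    have := mono c hc z ⟨hc.1.trans hz.1.le, hz.2.le.trans hu.2⟩ hz.1
    nlinarith
  · subst hcu; simp
  · obtain ⟨z, hz, e⟩ := mvt h h' h1 u hu c hc hcu
    have := mono z ⟨hu.1.trans hz.1.le, hz.2.le.trans hc.2⟩ c hc hz.2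
    nlinarith

/-- Integral midpoint inequality (one side). -/
lemma midpoint_aux (f f' f'' : ℝ → ℝ) (a b M : ℝ) (hab : a < b)
    (h1 : ∀ y ∈ Icc a b, HasDerivAt f (f' y) y)
    (h2 : ∀ y ∈ Icc a b, HasDerivAt f' (f'' y) y)
    (h3 : ∀ y ∈ Icc a b, -M ≤ f'' y) :
    f ((a + b) / 2) * (b - a) - M * (b - a) ^ 3 / 24 ≤ ∫ u in a..b, f u := by
  have hc : (a + b) / 2 ∈ Icc a b := ⟨by linarith, by linarith⟩
  set c := (a + b) / 2 with hcd
  have key : ∀ u ∈ Icc a b, f c + f' c * (u - c) - M / 2 * (u - c) ^ 2 ≤ f u := by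
    intro u hu
    have := tangent_aux (fun y => f y + M / 2 * (y - c) ^ 2) (fun y => f' y + M * (y - c))
      (fun y => f'' y + M) a b
      (fun y hy => by
        have e := (h1 y hy).add ((((hasDerivAt_id y).sub_const c).pow 2).const_mul (M / 2))
        exact e.congr_deriv (by simp; ring))
      (fun y hy => by
        have e := (h2 y hy).add (((hasDerivAt_id y).sub_const c).const_mul M)
        exact e.congr_deriv (by simp))
      (fun y hy => by linarith [h3 y hy]) c u hc hu
    simp at this
    linarith
  have hfi : IntervalIntegrable f volume a b := by
    apply ContinuousOn.intervalIntegrable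
    rw [uIcc_of_le hab.le]
    exact fun y hy => (h1 y hy).continuousAt.continuousWithinAt
  have hcont : Continuous fun u : ℝ => f c + f' c * (u - c) - M / 2 * (u - c) ^ 2 := by fun_prop
  have hI := intervalIntegral.integral_mono_on hab.le (hcont.intervalIntegrable a b) hfi key
  have hE : ∫ u in a..b, (f c + f' c * (u - c) - M / 2 * (u - c) ^ 2)
      = f c * (b - a) - M * (b - a) ^ 3 / 24 := by
    rw [intervalIntegral.integral_eq_sub_of_hasDerivAt
      (f := fun u => f c * u + f' c / 2 * (u - c) ^ 2 - M / 6 * (u - c) ^ 3) _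
      (hcont.intervalIntegrable a b)]
    · simp only [hcd]; ring
    · intro u _
      have e := (((hasDerivAt_id u).const_mul (f c)).add
        ((((hasDerivAt_id u).sub_const c).pow 2).const_mul (f' c / 2))).sub
        ((((hasDerivAt_id u).sub_const c).pow 3).const_mul (M / 6))
      exact e.congr_deriv (by simp; ring)
  linarith

theorem stmt10 (I : Set ℝ) (hI : Convex ℝ I) (hI0 : I ⊆ Set.Ici (0:ℝ)) (f f' f'' : ℝ → ℝ) (a b : ℝ)
    (ha : a ∈ interior I) (hb : b ∈ interior I) (hab : a < b)
    (hf' : ∀ y ∈ interior I, HasDerivAt f (f' y) y)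
    (hf'' : ∀ y ∈ interior I, HasDerivAt f' (f'' y) y)
    (hfint : IntervalIntegrable f'' MeasureTheory.volume a b)
    (q : ℝ) (hq : 1 ≤ q)
    (s : ℝ) (hs : s ∈ Set.Ioc (0:ℝ) 1)
    (hconv : ∀ u ∈ Set.Icc a b, ∀ v ∈ Set.Icc a b, ∀ t ∈ Set.Icc (0:ℝ) 1,
      |f'' (t * u + (1 - t) * v)| ^ q ≤ t ^ s * |f'' u| ^ q + (1 - t) ^ s * |f'' v| ^ q)
    (M : ℝ) (hM : 0 < M) (hbd : ∀ u ∈ Set.Icc a b, |f'' u| ≤ M) :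
    |(1 / (b - a)) * (∫ u in a..b, f u) - f ((a + b) / 2)|
      ≤ M * (3 * (s ^ 2 + 3 * s + 4) / ((s + 1) * (s + 2) * (s + 3))) ^ (1 / q) *
          ((b - a) ^ 2 / 24) := by
  have hsub : Icc a b ⊆ interior I := hI.interior.ordConnected.out ha hb
  have lo := midpoint_aux f f' f'' a b M hab (fun y hy => hf' y (hsub hy))
    (fun y hy => hf'' y (hsub hy)) (fun y hy => (abs_le.1 (hbd y hy)).1)
  have hi := midpoint_aux (fun y => -f y) (fun y => -f' y) (fun y => -f'' y) a b M hab
    (fun y hy => (hf' y (hsub hy)).fun_neg)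
    (fun y hy => (hf'' y (hsub hy)).fun_neg)
    (fun y hy => by linarith [(abs_le.1 (hbd y hy)).2])
  rw [intervalIntegral.integral_neg] at hi
  have hba : 0 < b - a := sub_pos.2 hab
  obtain ⟨hs0, hs1⟩ := hs
  have hK : 1 ≤ (3 * (s ^ 2 + 3 * s + 4) / ((s + 1) * (s + 2) * (s + 3))) ^ (1 / q) := by
    apply Real.one_le_rpow
    · rw [le_div_iff₀ (by positivity)]
      have e2 : s ^ 2 ≤ 1 := pow_le_one₀ hs0.le hs1
      have e3 : s ^ 3 ≤ 1 := pow_le_one₀ hs0.le hs1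
      nlinarith
    · positivity
  have main : |(1 / (b - a)) * (∫ u in a..b, f u) - f ((a + b) / 2)| ≤ M * ((b - a) ^ 2 / 24) := by
    have e : (1 / (b - a)) * (∫ u in a..b, f u) - f ((a + b) / 2)
        = ((∫ u in a..b, f u) - f ((a + b) / 2) * (b - a)) / (b - a) := by
      field_simp
    rw [e, abs_div, abs_of_pos hba, div_le_iff₀ hba, abs_le]
    constructor <;> nlinarith
  refine main.trans ?_
  gcongr
  exact le_mul_of_one_le_right hM.le hK
end

section
/- Let $f : I \subset [0,\infty) \to \mathbb{R}$ be twice differentiable on the interior $I^\circ$ of $I$ with $f''$ integrable on $[a,b]$, where $a, b \in I^\circ$ and $a < b$. Let $q \ge 1$, suppose $|f''|^q$ is $s$-convex in the second sense on $[a,b]$ for some fixed $s \in (0,1]$, and suppose $M > 0$ satisfies $|f''(u)| \le M$ for all $u \in [a,b]$. Then the perturbed trapezoid inequality holds: $\left| \int_a^b f(u)\,du - \frac{b-a}{2}\big[f(a) + f(b)\big] + \frac{(b-a)^2}{4}\big(f'(b) - f'(a)\big) \right| \le \frac{(b-a)^3}{6} \left( \frac{3(s^2 + 3s + 4)}{(s+1)(s+2)(s+3)}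 \right)^{1/q} M$. -/
open MeasureTheory Set intervalIntegral

theorem stmt11 (I : Set ℝ) (hI : Convex ℝ I) (hI0 : I ⊆ Set.Ici (0:ℝ)) (f f' f'' : ℝ → ℝ) (a b : ℝ)
    (ha : a ∈ interior I) (hb : b ∈ interior I) (hab : a < b)
    (hf' : ∀ y ∈ interior I, HasDerivAt f (f' y) y)
    (hf'' : ∀ y ∈ interior I, HasDerivAt f' (f'' y) y)
    (hfint : IntervalIntegrable f'' MeasureTheory.volume a b)
    (q : ℝ) (hq : 1 ≤ q)
    (s : ℝ) (hs : s ∈ Set.Ioc (0:ℝ) 1)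
    (hconv : ∀ u ∈ Set.Icc a b, ∀ v ∈ Set.Icc a b, ∀ t ∈ Set.Icc (0:ℝ) 1,
      |f'' (t * u + (1 - t) * v)| ^ q ≤ t ^ s * |f'' u| ^ q + (1 - t) ^ s * |f'' v| ^ q)
    (M : ℝ) (hM : 0 < M) (hbd : ∀ u ∈ Set.Icc a b, |f'' u| ≤ M) :
    |(∫ u in a..b, f u) - (b - a) / 2 * (f a + f b) + (b - a) ^ 2 / 4 * (f' b - f' a)|
      ≤ (b - a) ^ 3 / 6 * (3 * (s ^ 2 + 3 * s + 4) / ((s + 1) * (s + 2) * (s + 3))) ^ (1 / q) * M := by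
  obtain ⟨hs0, hs1⟩ := hs
  have hsub : Set.Icc a b ⊆ interior I := by
    have h := hI.interior.segment_subset ha hb
    rwa [segment_eq_Icc hab.le] at h
  have hu : Set.uIcc a b = Set.Icc a b := Set.uIcc_of_le hab.le
  have hfc : ContinuousOn f (Set.uIcc a b) := fun y hy =>
    (hf' y (hsub (hu ▸ hy))).continuousAt.continuousWithinAt
  have hfi : IntervalIntegrable f MeasureTheory.volume a b := hfc.intervalIntegrable
  -- the kernel
  let K : ℝ → ℝ := fun u => ((u - (a + b) / 2) ^ 2 + ((b - a) / 2) ^ 2) / 2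
  have hKc : Continuous K := by fun_prop
  have hKd : ∀ y, HasDerivAt K (y - (a + b) / 2) y := by
    intro y
    have h := (((((hasDerivAt_id y).sub_const ((a + b) / 2)).pow 2).add_const
      (((b - a) / 2) ^ 2)).div_const 2)
    exact h.congr_deriv (by simp)
  have hKf : IntervalIntegrable (fun u => K u * f'' u) MeasureTheory.volume a b :=
    hfint.continuousOn_mul hKc.continuousOn
  have hftc := intervalIntegral.integral_eq_sub_of_hasDerivAt
    (f := fun u => K u * f' u - (u - (a + b) / 2) * f u)
    (f' := fun u => K u * f'' u - f u) (a := a) (b := b)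
    (by
      intro y hy
      have hy' := hsub (hu ▸ hy)
      have h := ((hKd y).mul (hf'' y hy')).sub
        (((hasDerivAt_id y).sub_const ((a + b) / 2)).mul (hf' y hy'))
      exact h.congr_deriv (by simp only [id]; ring)) (hKf.sub hfi)
  rw [intervalIntegral.integral_sub hKf hfi] at hftc
  have hE : (∫ u in a..b, f u) - (b - a) / 2 * (f a + f b) + (b - a) ^ 2 / 4 * (f' b - f' a)
      = ∫ u in a..b, K u * f'' u := by
    simp only [K] at hftc ⊢
    linear_combination -hftc
  have hKint : ∫ u in a..b, K u * M = (b - a) ^ 3 / 6 * M := by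
    rw [intervalIntegral.integral_mul_const]
    have h := intervalIntegral.integral_eq_sub_of_hasDerivAt
      (f := fun u => (u - (a + b) / 2) ^ 3 / 6 + ((b - a) / 2) ^ 2 / 2 * u)
      (f' := K) (a := a) (b := b)
      (by
        intro y _
        have h := ((((hasDerivAt_id y).sub_const ((a + b) / 2)).pow 3).div_const 6).add
          ((hasDerivAt_id y).const_mul (((b - a) / 2) ^ 2 / 2))
        exact h.congr_deriv (by simp [K]; ring)) (hKc.intervalIntegrable _ _)
    rw [h]
    ring
  have hbound : |∫ u in a..b, K u * f'' u| ≤ (b - a) ^ 3 / 6 * M := by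
    rw [← hKint, ← Real.norm_eq_abs]
    refine intervalIntegral.norm_integral_le_of_norm_le hab.le ?_
      ((hKc.mul continuous_const).intervalIntegrable _ _)
    refine Filter.Eventually.of_forall fun t ht => ?_
    have hK0 : 0 ≤ K t := by simp only [K]; positivity
    rw [Real.norm_eq_abs, abs_mul, abs_of_nonneg hK0]
    exact mul_le_mul_of_nonneg_left (hbd t ⟨ht.1.le, ht.2⟩) hK0
  have hfac : 1 ≤ (3 * (s ^ 2 + 3 * s + 4) / ((s + 1) * (s + 2) * (s + 3))) ^ (1 / q) := by
    apply Real.one_le_rpow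
    · rw [one_le_div (by positivity)]
      nlinarith [mul_nonneg (sub_nonneg.2 hs1) (by positivity : 0 ≤ s ^ 2 + 4 * s + 6)]
    · positivity
  rw [hE]
  refine hbound.trans (mul_le_mul_of_nonneg_right ?_ hM.le)
  have h3 : 0 ≤ (b - a) ^ 3 / 6 := by
    have := sub_pos.2 hab
    positivity
  exact le_mul_of_one_le_right h3 hfac
end

section
/- Let $f : I \subset [0,\infty) \to \mathbb{R}$ be twice differentiable on the interior $I^\circ$ of $I$ with $f''$ integrable on $[a,b]$, where $a, b \in I^\circ$ and $a < b$. Let $p, q > 1$ with $\frac{1}{p} + \frac{1}{q} = 1$, and suppose $|f''|^q$ is $s$-concave in the second sense on $[a,b]$ for some fixed $s \in (0,1]$. Then $\left| \frac{1}{b-a}\int_a^b f(u)\,du - f\!\left(\frac{a+b}{2}\right) \right| \le \frac{2^{(s-1)/q}(b-a)^2}{16(2p+1)^{1/p}} \left[ \left| f''\!\left(\frac{3a+b}{4}\right)\right| + \left| f''\!\left(\frac{a+3b}{4}\right)\right| \right]$. -/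
open MeasureTheory Set intervalIntegral

lemma half_bound_s13 (g w : ℝ → ℝ) (c d p q s : ℝ) (hcd : c < d) (hp : 1 < p) (hq : 1 < q)
    (hpq : 1 / p + 1 / q = 1)
    (hg : IntervalIntegrable g volume c d) (hw : Continuous w) (hw0 : ∀ u, 0 ≤ w u)
    (hwp : ∫ u in c..d, (w u) ^ p = (d - c) ^ (2 * p + 1) / (2 * p + 1))
    (hmid : ∀ u ∈ Icc c d, |g u| ^ q + |g (c + d - u)| ^ q ≤ 2 ^ s * |g ((c + d) / 2)| ^ q) :
    |∫ u in c..d, w u * g u| ≤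
      (d - c) ^ 3 * ((2:ℝ) ^ ((s - 1) / q) / (2 * p + 1) ^ (1 / p)) * |g ((c + d) / 2)| := by
  have hp0 : 0 < p := by linarith
  have hq0 : 0 < q := by linarith
  have hpq' : p.HolderConjugate q := by
    rw [Real.holderConjugate_iff]
    exact ⟨hp, by simpa using hpq⟩
  set M := |g ((c + d) / 2)| with hM
  have hM0 : 0 ≤ M := abs_nonneg _
  have hgm : AEStronglyMeasurable g (volume.restrict (Ioc c d)) := by
    have := hg.1.aestronglyMeasurable
    exact this
  have hGm : AEStronglyMeasurable (fun u => |g u| ^ q) (volume.restrict (Ioc c d)) :=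
    (hgm.aemeasurable.abs.pow_const q).aestronglyMeasurable
  have hGint : IntervalIntegrable (fun u => |g u| ^ q) volume c d := by
    rw [intervalIntegrable_iff_integrableOn_Ioc_of_le hcd.le]
    refine Integrable.of_bound hGm (2 ^ s * M ^ q) ?_
    refine (ae_restrict_iff' measurableSet_Ioc).2 (Filter.Eventually.of_forall ?_)
    intro u hu
    have h1 := hmid u ⟨hu.1.le, hu.2⟩
    have h2 : 0 ≤ |g (c + d - u)| ^ q := by positivity
    have h3 : 0 ≤ |g u| ^ q := by positivity
    rw [Real.norm_eq_abs, abs_of_nonneg h3]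
    linarith
  have hGint' : IntervalIntegrable (fun u => |g (c + d - u)| ^ q) volume c d := by
    have := (hGint.comp_sub_left (c + d)).symm
    simpa using this
  have hrefl : ∫ u in c..d, |g (c + d - u)| ^ q = ∫ u in c..d, |g u| ^ q := by
    rw [intervalIntegral.integral_comp_sub_left (fun u => |g u| ^ q) (c + d)]
    simp
  have hGle : ∫ u in c..d, |g u| ^ q ≤ (d - c) * (2 ^ (s - 1) * M ^ q) := by
    have h1 : ∫ u in c..d, (|g u| ^ q + |g (c + d - u)| ^ q) ≤ ∫ u in c..d, (2 ^ s * M ^ q) :=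
      intervalIntegral.integral_mono_on hcd.le (hGint.add hGint')
        (by simp) hmid
    rw [intervalIntegral.integral_add hGint hGint', hrefl, intervalIntegral.integral_const,
      smul_eq_mul] at h1
    rw [Real.rpow_sub_one (by norm_num)]
    linarith
  have hG0 : 0 ≤ ∫ u in c..d, |g u| ^ q :=
    intervalIntegral.integral_nonneg hcd.le (fun u _ => by positivity)
  have hA : |∫ u in c..d, w u * g u| ≤ ∫ u in c..d, w u * |g u| := by
    refine (intervalIntegral.abs_integral_le_integral_abs hcd.le).trans (le_of_eq ?_)
    congr 1
    ext u
    rw [abs_mul, abs_of_nonneg (hw0 u)]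
  have hH : ∫ u in c..d, w u * |g u| ≤
      (∫ u in c..d, (w u) ^ p) ^ (1 / p) * (∫ u in c..d, |g u| ^ q) ^ (1 / q) := by
    simp only [intervalIntegral.integral_of_le hcd.le]
    apply integral_mul_le_Lp_mul_Lq_of_nonneg hpq'
    · exact Filter.Eventually.of_forall hw0
    · exact Filter.Eventually.of_forall (fun u => abs_nonneg _)
    · rw [← integrable_norm_rpow_iff hw.aestronglyMeasurable
        (by simpa using hp0) ENNReal.ofReal_ne_top]
      rw [ENNReal.toReal_ofReal hp0.le]
      have : Continuous (fun u => ‖w u‖ ^ p) :=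
        hw.norm.rpow_const (fun _ => Or.inr hp0.le)
      exact (this.intervalIntegrable c d).1
    · rw [← integrable_norm_rpow_iff hgm.aemeasurable.abs.aestronglyMeasurable
        (by simpa using hq0) ENNReal.ofReal_ne_top]
      rw [ENNReal.toReal_ofReal hq0.le]
      have h1 : Integrable (fun u => |g u| ^ q) (volume.restrict (Ioc c d)) := hGint.1
      simpa using h1
  refine hA.trans (hH.trans ?_)
  rw [hwp]
  have hh : 0 < d - c := by linarith
  have hP : 0 < 2 * p + 1 := by linarith
  calc _ ≤ ((d - c) ^ (2 * p + 1) / (2 * p + 1)) ^ (1 / p) *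
        ((d - c) * (2 ^ (s - 1) * M ^ q)) ^ (1 / q) := by gcongr
    _ = ((d - c) ^ ((2 * p + 1) * (1 / p)) * (d - c) ^ (1 / q)) *
        (2 ^ ((s - 1) / q) / (2 * p + 1) ^ (1 / p)) * M := by
      rw [Real.div_rpow (by positivity) hP.le, Real.mul_rpow hh.le (by positivity),
        Real.mul_rpow (by positivity) (by positivity), ← Real.rpow_mul hh.le,
        ← Real.rpow_mul (by norm_num), ← Real.rpow_mul hM0, mul_one_div_cancel hq0.ne',
        Real.rpow_one, mul_one_div (s - 1) q]
      ring
    _ = _ := by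
      rw [← Real.rpow_add hh]
      have : (2 * p + 1) * (1 / p) + 1 / q = (3 : ℕ) := by
        have : (2 * p + 1) * (1 / p) = 2 + 1 / p := by field_simp
        rw [this]; push_cast; linarith
      rw [this, Real.rpow_natCast]

lemma kernel_int (c d p : ℝ) (hcd : c < d) (hp : 1 < p) :
    ∫ u in c..d, ((u - c) ^ 2) ^ p = (d - c) ^ (2 * p + 1) / (2 * p + 1) := by
  have h := intervalIntegral.integral_comp_sub_right (a := c) (b := d)
    (fun u : ℝ => (u ^ 2) ^ p) c
  rw [h, sub_self]
  have : ∫ u in (0:ℝ)..(d - c), (u ^ 2) ^ p = ∫ u in (0:ℝ)..(d - c), u ^ (2 * p) := by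
    apply intervalIntegral.integral_congr
    intro u hu
    rw [uIcc_of_le (by linarith)] at hu
    simp only
    rw [Real.rpow_mul hu.1]
    norm_num
  rw [this, integral_rpow (Or.inl (by linarith)), Real.zero_rpow (by linarith)]
  simp

lemma kernel_int' (c d p : ℝ) (hcd : c < d) (hp : 1 < p) :
    ∫ u in c..d, ((u - d) ^ 2) ^ p = (d - c) ^ (2 * p + 1) / (2 * p + 1) := by
  rw [← kernel_int c d p hcd hp]
  have h := intervalIntegral.integral_comp_sub_left (a := c) (b := d)
    (fun u : ℝ => ((u - c) ^ 2) ^ p) (c + d)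
  simp only [add_sub_cancel_left, add_sub_cancel_right] at h
  rw [← h]
  congr 1
  ext u
  congr 1
  ring

lemma part_id (f f' f'' : ℝ → ℝ) (c d e : ℝ) (hcd : c ≤ d)
    (hf' : ∀ y ∈ Icc c d, HasDerivAt f (f' y) y)
    (hf'' : ∀ y ∈ Icc c d, HasDerivAt f' (f'' y) y)
    (hint : IntervalIntegrable f'' volume c d) :
    (∫ u in c..d, (u - e) ^ 2 * f'' u) - 2 * ∫ u in c..d, f u =
      ((d - e) ^ 2 * f' d - 2 * (d - e) * f d) - ((c - e) ^ 2 * f' c - 2 * (c - e) * f c) := by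
  have hfi : IntervalIntegrable f volume c d := by
    apply ContinuousOn.intervalIntegrable
    rw [uIcc_of_le hcd]
    exact fun y hy => (hf' y hy).continuousAt.continuousWithinAt
  have hk : IntervalIntegrable (fun u => (u - e) ^ 2 * f'' u) volume c d :=
    hint.continuousOn_mul (by fun_prop)
  rw [← intervalIntegral.integral_const_mul, ← intervalIntegral.integral_sub hk (hfi.const_mul 2)]
  apply intervalIntegral.integral_eq_sub_of_hasDerivAt
    (f := fun u => (u - e) ^ 2 * f' u - 2 * (u - e) * f u)
  · intro u hu
    rw [uIcc_of_le hcd] at hu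
    have h0 : HasDerivAt (fun u : ℝ => u - e) 1 u := (hasDerivAt_id u).sub_const e
    have h1 := ((h0.fun_pow 2).fun_mul (hf'' u hu)).fun_sub ((h0.const_mul 2).fun_mul (hf' u hu))
    convert h1 using 1
    push_cast
    ring
  · exact hk.sub (hfi.const_mul 2)

theorem stmt13 (I : Set ℝ) (hI : Convex ℝ I) (hI0 : I ⊆ Set.Ici (0:ℝ)) (f f' f'' : ℝ → ℝ) (a b : ℝ)
    (ha : a ∈ interior I) (hb : b ∈ interior I) (hab : a < b)
    (hf' : ∀ y ∈ interior I, HasDerivAt f (f' y) y)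
    (hf'' : ∀ y ∈ interior I, HasDerivAt f' (f'' y) y)
    (hfint : IntervalIntegrable f'' MeasureTheory.volume a b)
    (p q : ℝ) (hp : 1 < p) (hq : 1 < q) (hpq : 1 / p + 1 / q = 1)
    (s : ℝ) (hs : s ∈ Set.Ioc (0:ℝ) 1)
    (hconv : ∀ u ∈ Set.Icc a b, ∀ v ∈ Set.Icc a b, ∀ t ∈ Set.Icc (0:ℝ) 1,
      |f'' (t * u + (1 - t) * v)| ^ q ≥ t ^ s * |f'' u| ^ q + (1 - t) ^ s * |f'' v| ^ q) :
    |(1 / (b - a)) * (∫ u in a..b, f u) - f ((a + b) / 2)|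
      ≤ (2:ℝ) ^ ((s - 1) / q) * (b - a) ^ 2 / (16 * (2 * p + 1) ^ (1 / p)) *
          (|f'' ((3 * a + b) / 4)| + |f'' ((a + 3 * b) / 4)|) := by
  obtain ⟨m, hm⟩ : ∃ m, m = (a + b) / 2 := ⟨_, rfl⟩
  have ham : a < m := by rw [hm]; linarith
  have hmb : m < b := by rw [hm]; linarith
  have hsub : Icc a b ⊆ interior I := hI.interior.ordConnected.out ha hb
  have key : ∀ c d : ℝ, a ≤ c → d ≤ b → ∀ u ∈ Icc c d,
      |f'' u| ^ q + |f'' (c + d - u)| ^ q ≤ 2 ^ s * |f'' ((c + d) / 2)| ^ q := by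
    intro c d hc hd u hu
    have h := hconv u ⟨hc.trans hu.1, hu.2.trans hd⟩ (c + d - u)
      ⟨by linarith [hu.2], by linarith [hu.1]⟩ (1 / 2) (by norm_num)
    have e1 : (1 / 2 : ℝ) * u + (1 - 1 / 2) * (c + d - u) = (c + d) / 2 := by ring
    have e2 : (1 - 1 / 2 : ℝ) = 1 / 2 := by norm_num
    rw [e1, e2] at h
    have e3 : (2:ℝ) ^ s * (1 / 2) ^ s = 1 := by
      rw [← Real.mul_rpow (by norm_num) (by norm_num)]; norm_num
    calc _ = (2:ℝ) ^ s * ((1 / 2) ^ s * |f'' u| ^ q + (1 / 2) ^ s * |f'' (c + d - u)| ^ q) := by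
          linear_combination (-(|f'' u| ^ q + |f'' (c + d - u)| ^ q)) * e3
      _ ≤ _ := by gcongr
  have hi1 : IntervalIntegrable f'' volume a m := hfint.mono_set (by
    rw [uIcc_of_le ham.le, uIcc_of_le hab.le]; exact Icc_subset_Icc le_rfl hmb.le)
  have hi2 : IntervalIntegrable f'' volume m b := hfint.mono_set (by
    rw [uIcc_of_le hmb.le, uIcc_of_le hab.le]; exact Icc_subset_Icc ham.le le_rfl)
  have s1 : Icc a m ⊆ interior I := (Icc_subset_Icc le_rfl hmb.le).trans hsub
  have s2 : Icc m b ⊆ interior I := (Icc_subset_Icc ham.le le_rfl).trans hsub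
  have I1 := part_id f f' f'' a m a ham.le (fun y hy => hf' y (s1 hy))
    (fun y hy => hf'' y (s1 hy)) hi1
  have I2 := part_id f f' f'' m b b hmb.le (fun y hy => hf' y (s2 hy))
    (fun y hy => hf'' y (s2 hy)) hi2
  have B1 := half_bound_s13 f'' (fun u => (u - a) ^ 2) a m p q s ham hp hq hpq hi1 (by fun_prop)
    (fun u => by positivity) (kernel_int a m p ham hp) (key a m le_rfl hmb.le)
  have B2 := half_bound_s13 f'' (fun u => (u - b) ^ 2) m b p q s hmb hp hq hpq hi2 (by fun_prop)
    (fun u => by positivity) (kernel_int' m b p hmb hp) (key m b ham.le le_rfl)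
  have hc : ContinuousOn f (Icc a b) :=
    fun y hy => (hf' y (hsub hy)).continuousAt.continuousWithinAt
  have hadd : (∫ u in a..m, f u) + ∫ u in m..b, f u = ∫ u in a..b, f u := by
    apply intervalIntegral.integral_add_adjacent_intervals
    · apply ContinuousOn.intervalIntegrable
      rw [uIcc_of_le ham.le]; exact hc.mono (Icc_subset_Icc le_rfl hmb.le)
    · apply ContinuousOn.intervalIntegrable
      rw [uIcc_of_le hmb.le]; exact hc.mono (Icc_subset_Icc ham.le le_rfl)
  have em1 : (a + m) / 2 = (3 * a + b) / 4 := by rw [hm]; ring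
  have em2 : (m + b) / 2 = (a + 3 * b) / 4 := by rw [hm]; ring
  have el1 : m - a = (b - a) / 2 := by rw [hm]; ring
  have el2 : b - m = (b - a) / 2 := by rw [hm]; ring
  have el3 : m - b = -((b - a) / 2) := by rw [hm]; ring
  rw [em1, el1] at B1
  rw [em2, el2] at B2
  rw [el1] at I1
  rw [el3] at I2
  rw [← hm]
  have hba : 0 < b - a := by linarith
  generalize (∫ u in a..m, (u - a) ^ 2 * f'' u) = X at *
  generalize (∫ u in m..b, (u - b) ^ 2 * f'' u) = Y at *
  have E : (1 / (b - a)) * (∫ u in a..b, f u) - f m = (X + Y) / (2 * (b - a)) := by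
    rw [← hadd]
    field_simp
    linear_combination (-1) * I1 - I2
  rw [E, abs_div, abs_of_pos (by positivity : 0 < 2 * (b - a)), div_le_iff₀ (by positivity)]
  refine (abs_add_le X Y).trans ((add_le_add B1 B2).trans (le_of_eq ?_))
  have hP : 0 < (2 * p + 1) ^ (1 / p) := by positivity
  field_simp
  ring
end

section
/- (Hermite–Hadamard inequality for $s$-convex functions, used in the proof of the $s$-concave Ostrowski-type theorem.) Let $s \in (0,1)$ and let $f : [0,\infty) \to [0,\infty)$ be $s$-convex in the second sense. Let $a, b \in [0,\infty)$ with $a < b$, and suppose $f$ is integrable on $[a,b]$. Then $2^{s-1} f\!\left(\frac{a+b}{2}\right) \le \frac{1}{b-a}\int_a^b f(x)\,dx \le \frac{f(a) + f(b)}{s+1}$. -/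
open MeasureTheory Set intervalIntegral

theorem stmt14 (f : ℝ → ℝ) (s : ℝ) (hs : s ∈ Set.Ioo (0:ℝ) 1)
    (hf0 : ∀ x ∈ Set.Ici (0:ℝ), 0 ≤ f x)
    (hconv : ∀ u ∈ Set.Ici (0:ℝ), ∀ v ∈ Set.Ici (0:ℝ), ∀ t ∈ Set.Icc (0:ℝ) 1,
      f (t * u + (1 - t) * v) ≤ t ^ s * f u + (1 - t) ^ s * f v)
    (a b : ℝ) (ha : 0 ≤ a) (hb : 0 ≤ b) (hab : a < b)
    (hfint : IntervalIntegrable f MeasureTheory.volume a b) :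
    (2:ℝ) ^ (s - 1) * f ((a + b) / 2) ≤ (1 / (b - a)) * (∫ x in a..b, f x)
      ∧ (1 / (b - a)) * (∫ x in a..b, f x) ≤ (f a + f b) / (s + 1) := by
  obtain ⟨hs0, hs1⟩ := hs
  have hd : 0 < b - a := sub_pos.mpr hab
  have hJ : ∫ x in (0:ℝ)..1, x ^ s = 1 / (s + 1) := by
    rw [integral_rpow (Or.inl (by linarith)), Real.one_rpow, Real.zero_rpow (by linarith)]
    ring
  have h1 : ∫ x in a..b, ((x - a) / (b - a)) ^ s = (b - a) * (1 / (s + 1)) := by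
    have e := intervalIntegral.integral_comp_div_sub (a := a) (b := b)
      (fun x : ℝ => x ^ s) hd.ne' (a / (b - a))
    have e1 : b / (b - a) - a / (b - a) = 1 := by field_simp
    rw [sub_self, e1, hJ, smul_eq_mul] at e
    rw [← e]
    congr 1
    ext x
    rw [sub_div]
  have h2 : ∫ x in a..b, ((b - x) / (b - a)) ^ s = (b - a) * (1 / (s + 1)) := by
    rw [← h1]
    have e := intervalIntegral.integral_comp_sub_left (a := a) (b := b)
      (fun x : ℝ => ((x - a) / (b - a)) ^ s) (a + b)
    have e1 : a + b - b = a := by ring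
    have e2 : a + b - a = b := by ring
    rw [e1, e2] at e
    rw [← e]
    congr 1
    ext x
    congr 2
    ring
  have c1 : IntervalIntegrable (fun x => ((x - a) / (b - a)) ^ s) volume a b :=
    (Continuous.rpow_const (by fun_prop) (fun _ => Or.inr hs0.le)).intervalIntegrable _ _
  have c2 : IntervalIntegrable (fun x => ((b - x) / (b - a)) ^ s) volume a b :=
    (Continuous.rpow_const (by fun_prop) (fun _ => Or.inr hs0.le)).intervalIntegrable _ _
  have hr : IntervalIntegrable (fun x => f (a + b - x)) volume a b := by
    have e := hfint.comp_sub_left (a + b)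
    have e1 : a + b - b = a := by ring
    have e2 : a + b - a = b := by ring
    rw [e1, e2] at e
    exact e.symm
  have hri : ∫ x in a..b, f (a + b - x) = ∫ x in a..b, f x := by
    rw [intervalIntegral.integral_comp_sub_left f (a + b)]
    congr 1 <;> ring
  constructor
  · have key : ∫ x in a..b, f ((a + b) / 2) ≤
        ∫ x in a..b, (1 / 2 : ℝ) ^ s * (f x + f (a + b - x)) := by
      apply intervalIntegral.integral_mono_on hab.le (by simp) ((hfint.add hr).const_mul _)
      intro x hx
      have h := hconv x (ha.trans hx.1) (a + b - x) (by simp only [Set.mem_Ici]; linarith [hx.2])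
        (1 / 2) (by norm_num)
      have e : (1 / 2 : ℝ) * x + (1 - 1 / 2) * (a + b - x) = (a + b) / 2 := by ring
      rw [e, show (1 - 1 / 2 : ℝ) = 1 / 2 by norm_num] at h
      linarith
    rw [intervalIntegral.integral_const, smul_eq_mul, intervalIntegral.integral_const_mul,
      intervalIntegral.integral_add hfint hr, hri] at key
    have hp : (2:ℝ) ^ (s - 1) * ((1 / 2 : ℝ) ^ s * 2) = 1 := by
      rw [Real.rpow_sub_one (by norm_num), one_div, Real.inv_rpow (by norm_num)]
      have : (2:ℝ) ^ s ≠ 0 := (Real.rpow_pos_of_pos (by norm_num) s).ne'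
      field_simp
    rw [one_div_mul_eq_div, le_div_iff₀ hd]
    have := mul_le_mul_of_nonneg_left key (Real.rpow_nonneg (by norm_num : (0:ℝ) ≤ 2) (s - 1))
    calc _ = (2:ℝ) ^ (s - 1) * ((b - a) * f ((a + b) / 2)) := by ring
      _ ≤ _ := this
      _ = ((2:ℝ) ^ (s - 1) * ((1 / 2 : ℝ) ^ s * 2)) * ∫ x in a..b, f x := by ring
      _ = _ := by rw [hp, one_mul]
  · have key : ∫ x in a..b, f x ≤
        ∫ x in a..b, (((b - x) / (b - a)) ^ s * f a + ((x - a) / (b - a)) ^ s * f b) := by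
      apply intervalIntegral.integral_mono_on hab.le hfint
        ((c2.mul_const _).add (c1.mul_const _))
      intro x hx
      have h := hconv a ha b hb ((b - x) / (b - a))
        ⟨div_nonneg (by linarith [hx.2]) hd.le, by rw [div_le_one hd]; linarith [hx.1]⟩
      have e0 : 1 - (b - x) / (b - a) = (x - a) / (b - a) := by field_simp; ring
      have e : (b - x) / (b - a) * a + (x - a) / (b - a) * b = x := by field_simp; ring
      rw [e0, e] at h
      exact h
    rw [intervalIntegral.integral_add (c2.mul_const _) (c1.mul_const _),
      intervalIntegral.integral_mul_const, intervalIntegral.integral_mul_const, h1, h2] at key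
    rw [one_div_mul_eq_div, div_le_iff₀ hd]
    calc _ ≤ _ := key
      _ = _ := by ring
end

section
/- Let $0 < a < b$, $s \in (0,1)$, $p, q > 1$ with $\frac{1}{p} + \frac{1}{q} = 1$, and let $M > 0$ satisfy $s(1-s)u^{s-2} \le M$ for all $u \in [a,b]$. Then for every $x \in [a,b]$: $\left| L_s^s(a,b) - x^s + s\,(x - A(a,b))\,x^{s-1} \right| \le \frac{3M}{(2p+1)^{1/p}} \left(\frac{2}{s+1}\right)^{1/q} \Big[ \frac{(b-a)^2}{24} + \frac{1}{2}\big(x - A(a,b)\big)^2 \Big]$. In particular, taking $x = A(a,b)$: $\left| L_s^s(a,b) - A(a,b)^s \right| \le \frac{M}{8(2p+1)^{1/p}} \left(\frac{2}{s+1}\right)^{1/q} (b-a)^2$. -/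
open MeasureTheory Set intervalIntegral

lemma aux_tangent_s16 (a b : ℝ) (ha : 0 < a) (s : ℝ) (hs : s ∈ Set.Ioo (0:ℝ) 1)
    (M : ℝ) (hM : 0 < M) (hbd : ∀ u ∈ Set.Icc a b, s * (1 - s) * u ^ (s - 2) ≤ M)
    (e : ℝ) (he : e = 1 ∨ e = -1) (x : ℝ) (hx : x ∈ Icc a b) (t : ℝ) (ht : t ∈ Icc a b) :
    0 ≤ e * (t ^ s - x ^ s - s * (t - x) * x ^ (s - 1)) + M * (t - x) ^ 2 / 2 := by
  have hd1 : ∀ y ∈ Icc a b, HasDerivAt (fun t : ℝ => e * t ^ s + M * t ^ 2 / 2)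
      (e * (s * y ^ (s - 1)) + M * y) y := by
    intro y hy
    have hy0 : 0 < y := lt_of_lt_of_le ha hy.1
    have h1 := (Real.hasDerivAt_rpow_const (x := y) (p := s) (Or.inl hy0.ne')).const_mul e
    have h2 := (((hasDerivAt_id y).pow 2).const_mul M).div_const 2
    refine (h1.add h2).congr_deriv ?_
    simp
    ring
  have hd2 : ∀ y ∈ Icc a b, HasDerivAt (fun y : ℝ => e * (s * y ^ (s - 1)) + M * y)
      (e * (s * ((s - 1) * y ^ (s - 2))) + M) y := by
    intro y hy
    have hy0 : 0 < y := lt_of_lt_of_le ha hy.1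
    have h1 := ((Real.hasDerivAt_rpow_const (x := y) (p := s - 1)
      (Or.inl hy0.ne')).const_mul s).const_mul e
    have h2 := (hasDerivAt_id y).const_mul M
    refine (h1.add h2).congr_deriv ?_
    rw [show s - 1 - 1 = s - 2 by ring]
    simp
  have hconv : ConvexOn ℝ (Icc a b) (fun t : ℝ => e * t ^ s + M * t ^ 2 / 2) := by
    refine convexOn_of_hasDerivWithinAt2_nonneg (convex_Icc a b)
      (fun y hy => (hd1 y hy).continuousAt.continuousWithinAt)
      (fun y hy => (hd1 y (interior_subset hy)).hasDerivWithinAt)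
      (fun y hy => (hd2 y (interior_subset hy)).hasDerivWithinAt) ?_
    intro y hy
    have hy' := interior_subset hy
    have hy0 : 0 < y := lt_of_lt_of_le ha hy'.1
    have h1 := hbd y hy'
    have h2 : 0 ≤ s * (1 - s) * y ^ (s - 2) :=
      mul_nonneg (mul_nonneg hs.1.le (by linarith [hs.2])) (Real.rpow_nonneg hy0.le _)
    rcases he with rfl | rfl <;> linarith
  rcases lt_trichotomy x t with h | h | h
  · have := hconv.le_slope_of_hasDerivAt hx ht h (hd1 x hx)
    rw [slope_def_field, le_div_iff₀ (by linarith)] at this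
    linarith
  · subst h; simp
  · have := hconv.slope_le_of_hasDerivAt ht hx h (hd1 x hx)
    rw [slope_def_field, div_le_iff₀ (by linarith)] at this
    linarith

lemma aux_int_s16 (a b : ℝ) (ha : 0 < a) (hab : a < b) (s : ℝ) (hs : s ∈ Set.Ioo (0:ℝ) 1)
    (M : ℝ) (hM : 0 < M) (hbd : ∀ u ∈ Set.Icc a b, s * (1 - s) * u ^ (s - 2) ≤ M)
    (e : ℝ) (he : e = 1 ∨ e = -1) (x : ℝ) (hx : x ∈ Icc a b) :
    0 ≤ e * ((b ^ (s + 1) - a ^ (s + 1)) / ((s + 1) * (b - a)) - x ^ s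
      + s * (x - ((a + b) / 2)) * x ^ (s - 1))
      + M * ((b - a) ^ 2 / 24 + (1 / 2) * (x - ((a + b) / 2)) ^ 2) := by
  have hs1 : s + 1 ≠ 0 := by linarith [hs.1]
  have hd : ∀ t ∈ Icc a b, HasDerivAt (fun t : ℝ => e * (t ^ (s + 1) / (s + 1) - x ^ s * t
      - s * x ^ (s - 1) * ((t - x) ^ 2 / 2)) + M * ((t - x) ^ 3 / 6))
      (e * (t ^ s - x ^ s - s * (t - x) * x ^ (s - 1)) + M * (t - x) ^ 2 / 2) t := by
    intro t ht
    have ht0 : 0 < t := lt_of_lt_of_le ha ht.1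
    have h1 := (Real.hasDerivAt_rpow_const (x := t) (p := s + 1) (Or.inl ht0.ne')).div_const (s + 1)
    have h2 := (hasDerivAt_id t).const_mul (x ^ s)
    have h3 := ((((hasDerivAt_id t).sub_const x).pow 2).div_const 2).const_mul (s * x ^ (s - 1))
    have h4 := ((((hasDerivAt_id t).sub_const x).pow 3).div_const 6).const_mul M
    refine ((((h1.sub h2).sub h3).const_mul e).add h4).congr_deriv ?_
    rw [show s + 1 - 1 = s by ring, mul_div_cancel_left₀ _ hs1]
    simp
    ring
  have hm : MonotoneOn (fun t : ℝ => e * (t ^ (s + 1) / (s + 1) - x ^ s * t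
      - s * x ^ (s - 1) * ((t - x) ^ 2 / 2)) + M * ((t - x) ^ 3 / 6)) (Icc a b) := by
    refine monotoneOn_of_deriv_nonneg (convex_Icc a b)
      (fun y hy => (hd y hy).continuousAt.continuousWithinAt)
      (fun y hy => (hd y (interior_subset hy)).differentiableAt.differentiableWithinAt) ?_
    intro y hy
    rw [(hd y (interior_subset hy)).deriv]
    exact aux_tangent_s16 a b ha s hs M hM hbd e he x hx y (interior_subset hy)
  have h := hm (left_mem_Icc.2 hab.le) (right_mem_Icc.2 hab.le) hab.le
  simp only at h
  have hba : 0 < b - a := by linarith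
  refine nonneg_of_mul_nonneg_right (a := b - a) ?_ hba
  have key : (b - a) * ((b ^ (s + 1) - a ^ (s + 1)) / ((s + 1) * (b - a)))
      = b ^ (s + 1) / (s + 1) - a ^ (s + 1) / (s + 1) := by
    field_simp
  have e1 : (b - a) * (e * ((b ^ (s + 1) - a ^ (s + 1)) / ((s + 1) * (b - a)) - x ^ s
      + s * (x - ((a + b) / 2)) * x ^ (s - 1))
      + M * ((b - a) ^ 2 / 24 + (1 / 2) * (x - ((a + b) / 2)) ^ 2))
      = e * ((b - a) * ((b ^ (s + 1) - a ^ (s + 1)) / ((s + 1) * (b - a)))) + (b - a) * (e * (- x ^ s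
      + s * (x - ((a + b) / 2)) * x ^ (s - 1))
      + M * ((b - a) ^ 2 / 24 + (1 / 2) * (x - ((a + b) / 2)) ^ 2)) := by ring
  rw [e1, key]
  linarith

theorem stmt16 (a b : ℝ) (ha : 0 < a) (hab : a < b) (s : ℝ) (hs : s ∈ Set.Ioo (0:ℝ) 1)
    (M : ℝ) (hM : 0 < M) (hbd : ∀ u ∈ Set.Icc a b, s * (1 - s) * u ^ (s - 2) ≤ M)
    (p q : ℝ) (hp : 1 < p) (hq : 1 < q) (hpq : 1 / p + 1 / q = 1) :
    (∀ x ∈ Set.Icc a b,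
        |(b ^ (s + 1) - a ^ (s + 1)) / ((s + 1) * (b - a)) - x ^ s + s * (x - ((a + b) / 2)) * x ^ (s - 1)|
          ≤ 3 * M / (2 * p + 1) ^ (1 / p) * (2 / (s + 1)) ^ (1 / q) *
              ((b - a) ^ 2 / 24 + (1 / 2) * (x - ((a + b) / 2)) ^ 2))
      ∧ |(b ^ (s + 1) - a ^ (s + 1)) / ((s + 1) * (b - a)) - ((a + b) / 2) ^ s|
          ≤ M / (8 * (2 * p + 1) ^ (1 / p)) * (2 / (s + 1)) ^ (1 / q) * (b - a) ^ 2 := by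
  have main : ∀ x ∈ Set.Icc a b,
        |(b ^ (s + 1) - a ^ (s + 1)) / ((s + 1) * (b - a)) - x ^ s + s * (x - ((a + b) / 2)) * x ^ (s - 1)|
          ≤ 3 * M / (2 * p + 1) ^ (1 / p) * (2 / (s + 1)) ^ (1 / q) *
              ((b - a) ^ 2 / 24 + (1 / 2) * (x - ((a + b) / 2)) ^ 2) := by
    intro x hx
    have hp0 : 0 < p := by linarith
    have hD : 0 < (2 * p + 1) ^ (1 / p) := Real.rpow_pos_of_pos (by linarith) _
    have hD3 : (2 * p + 1) ^ (1 / p) ≤ 3 := by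
      have h1 := one_add_mul_self_le_rpow_one_add (s := 2) (by norm_num) hp.le
      have h2 : (2 * p + 1) ^ (1 / p) ≤ ((3:ℝ) ^ p) ^ (1 / p) := by
        apply Real.rpow_le_rpow (by linarith) _ (by positivity)
        norm_num at h1
        linarith
      rwa [← Real.rpow_mul (by norm_num), mul_one_div_cancel hp0.ne', Real.rpow_one] at h2
    have hC : 1 ≤ (2 / (s + 1)) ^ (1 / q) := by
      apply Real.one_le_rpow _ (by positivity)
      rw [le_div_iff₀ (by linarith [hs.1])]
      linarith [hs.2]
    have hK : M ≤ 3 * M / (2 * p + 1) ^ (1 / p) * (2 / (s + 1)) ^ (1 / q) := by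
      have h1 : M ≤ 3 * M / (2 * p + 1) ^ (1 / p) := by
        rw [le_div_iff₀ hD]
        nlinarith
      exact h1.trans (le_mul_of_one_le_right (by positivity) hC)
    refine le_trans ?_ (mul_le_mul_of_nonneg_right hK (by positivity))
    have h1 := aux_int_s16 a b ha hab s hs M hM hbd 1 (Or.inl rfl) x hx
    have h2 := aux_int_s16 a b ha hab s hs M hM hbd (-1) (Or.inr rfl) x hx
    rw [abs_le]
    constructor <;> linarith
  refine ⟨main, ?_⟩
  have h := main ((a + b) / 2) ⟨by linarith, by linarith⟩
  rw [sub_self, mul_zero, zero_mul, add_zero] at h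
  refine h.trans (le_of_eq ?_)
  have hD : 0 < (2 * p + 1) ^ (1 / p) := Real.rpow_pos_of_pos (by linarith) _
  generalize (2 * p + 1) ^ (1 / p) = D at *
  field_simp
  ring
end

section
/- Let $0 < a < b$, $s \in (0,1)$, $q \ge 1$, and let $M > 0$ satisfy $s(1-s)u^{s-2} \le M$ for all $u \in [a,b]$. Then for every $x \in [a,b]$: $\left| L_s^s(a,b) - x^s + s\,(x - A(a,b))\,x^{s-1} \right| \le M \left( \frac{3(s^2 + 3s + 4)}{(s+1)(s+2)(s+3)} \right)^{1/q} \Big[ \frac{(b-a)^2}{24} + \frac{1}{2}\big(x - A(a,b)\big)^2 \Big]$. In particular, taking $x = A(a,b)$: $\left| L_s^s(a,b) - A(a,b)^s \right| \le \frac{M}{24} \left( \frac{3(s^2 + 3s + 4)}{(s+1)(s+2)(s+3)} \right)^{1/q} (b-a)^2$. -/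
open MeasureTheory Set intervalIntegral

lemma tangent_aux_s17 (a b : ℝ) (g g' g'' : ℝ → ℝ)
    (h1 : ∀ t ∈ Icc a b, HasDerivAt g (g' t) t)
    (h2 : ∀ t ∈ Icc a b, HasDerivAt g' (g'' t) t)
    (h3 : ∀ t ∈ Icc a b, 0 ≤ g'' t) (x t : ℝ) (hx : x ∈ Icc a b) (ht : t ∈ Icc a b) :
    g x + g' x * (t - x) ≤ g t := by
  have hc : ConvexOn ℝ (Icc a b) g := by
    apply convexOn_of_hasDerivWithinAt2_nonneg (convex_Icc a b) (f' := g') (f'' := g'')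
    · exact fun u hu => (h1 u hu).continuousAt.continuousWithinAt
    · exact fun u hu => (h1 u (interior_subset hu)).hasDerivWithinAt
    · exact fun u hu => (h2 u (interior_subset hu)).hasDerivWithinAt
    · exact fun u hu => h3 u (interior_subset hu)
  rcases lt_trichotomy x t with h | h | h
  · have := hc.le_slope_of_hasDerivAt hx ht h (h1 x hx)
    rw [slope_def_field, le_div_iff₀ (by linarith)] at this
    linarith
  · subst h; simp
  · have := hc.slope_le_of_hasDerivAt ht hx h (h1 x hx)
    rw [slope_def_field, div_le_iff₀ (by linarith)] at this
    nlinarith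

lemma main_aux (a b : ℝ) (ha : 0 < a) (hab : a < b) (s : ℝ) (hs : s ∈ Set.Ioo (0:ℝ) 1)
    (M : ℝ) (hbd : ∀ u ∈ Set.Icc a b, s * (1 - s) * u ^ (s - 2) ≤ M)
    (x : ℝ) (hx : x ∈ Icc a b) :
    |(b ^ (s + 1) - a ^ (s + 1)) / ((s + 1) * (b - a)) - x ^ s + s * (x - ((a + b) / 2)) * x ^ (s - 1)|
          ≤ M * ((b - a) ^ 2 / 24 + (1 / 2) * (x - ((a + b) / 2)) ^ 2) := by
  obtain ⟨hs0, hs1⟩ := hs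
  have d1 : ∀ t ∈ Icc a b, HasDerivAt (fun t : ℝ => t ^ s) (s * t ^ (s - 1)) t := fun t ht =>
    Real.hasDerivAt_rpow_const (Or.inl (by linarith [ht.1]))
  have d2 : ∀ t ∈ Icc a b, HasDerivAt (fun t : ℝ => s * t ^ (s - 1)) (-(s * (1 - s) * t ^ (s - 2))) t := by
    intro t ht
    have := (Real.hasDerivAt_rpow_const (x := t) (p := s - 1) (Or.inl (by linarith [ht.1]))).const_mul s
    refine HasDerivAt.congr_deriv this ?_
    rw [show s - 1 - 1 = s - 2 by ring]; ring
  have up : ∀ t ∈ Icc a b, t ^ s ≤ x ^ s + s * x ^ (s - 1) * (t - x) := by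
    intro t ht
    have := tangent_aux_s17 a b (fun t => -(t ^ s)) (fun t => -(s * t ^ (s - 1)))
      (fun t => -(-(s * (1 - s) * t ^ (s - 2)))) (fun t ht => (d1 t ht).neg)
      (fun t ht => (d2 t ht).neg) (fun t ht => by
        have : 0 < t := by linarith [ht.1]
        have h1 : 0 < 1 - s := by linarith
        rw [neg_neg]; positivity) x t hx ht
    linarith
  have lo : ∀ t ∈ Icc a b, x ^ s + s * x ^ (s - 1) * (t - x) - M / 2 * (t - x) ^ 2 ≤ t ^ s := by
    intro t ht
    have := tangent_aux_s17 a b (fun t => t ^ s + M / 2 * t ^ 2) (fun t => s * t ^ (s - 1) + M * t)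
      (fun t => -(s * (1 - s) * t ^ (s - 2)) + M) (fun t ht => by
        have := (d1 t ht).add ((hasDerivAt_pow 2 t).const_mul (M / 2))
        refine HasDerivAt.congr_deriv this ?_
        push_cast; ring)
      (fun t ht => by
        have := (d2 t ht).add ((hasDerivAt_id t).const_mul M)
        refine HasDerivAt.congr_deriv this ?_
        ring) (fun t ht => by linarith [hbd t ht]) x t hx ht
    nlinarith
  have hI : ∫ t in a..b, t ^ s = (b ^ (s + 1) - a ^ (s + 1)) / (s + 1) :=
    integral_rpow (Or.inl (by linarith))
  have ii : IntervalIntegrable (fun t : ℝ => t ^ s) volume a b :=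
    intervalIntegral.intervalIntegrable_rpow' (by linarith)
  have poly : ∀ c d e : ℝ, ∫ t in a..b, (c + d * (t - x) - e * (t - x) ^ 2) =
      c * (b - a) + d * ((b - x) ^ 2 - (a - x) ^ 2) / 2 - e * ((b - x) ^ 3 - (a - x) ^ 3) / 3 := by
    intro c d e
    rw [integral_eq_sub_of_hasDerivAt
      (f := fun t => c * t + d * (t - x) ^ 2 / 2 - e * (t - x) ^ 3 / 3)]
    · ring
    · intro t _
      have h0 := (hasDerivAt_id t).sub_const x
      have := (((hasDerivAt_id t).const_mul c).add (((h0.pow 2).const_mul d).div_const 2)).sub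
        (((h0.pow 3).const_mul e).div_const 3)
      refine HasDerivAt.congr_deriv this ?_
      simp only [id]; push_cast; ring
    · exact Continuous.intervalIntegrable (by fun_prop) _ _
  have U := integral_mono_on hab.le ii
    (Continuous.intervalIntegrable (u := fun t => x ^ s + s * x ^ (s - 1) * (t - x) - 0 * (t - x) ^ 2) (by fun_prop) a b)
    (fun t ht => by linarith [up t ht])
  have L := integral_mono_on hab.le
    (Continuous.intervalIntegrable (u := fun t => x ^ s + s * x ^ (s - 1) * (t - x) - M / 2 * (t - x) ^ 2) (by fun_prop) a b) ii
    lo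
  rw [poly, hI] at U L
  have hba : 0 < b - a := by linarith
  rw [← div_div]
  have hM : 0 ≤ M := by
    have : 0 < x := by linarith [hx.1]
    have h1 : 0 < 1 - s := by linarith
    exact le_trans (by positivity) (hbd x hx)
  generalize (b ^ (s + 1) - a ^ (s + 1)) / (s + 1) = I at *
  generalize x ^ s = X at *
  generalize x ^ (s - 1) = Y at *
  have U' : I / (b - a) ≤ X + s * Y * ((a + b) / 2 - x) := by
    rw [div_le_iff₀ hba]; linarith
  have L' : X + s * Y * ((a + b) / 2 - x) - M * ((b - a) ^ 2 / 24 + (1 / 2) * (x - ((a + b) / 2)) ^ 2)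
      ≤ I / (b - a) := by
    rw [le_div_iff₀ hba]; linarith
  have hR : 0 ≤ M * ((b - a) ^ 2 / 24 + (1 / 2) * (x - ((a + b) / 2)) ^ 2) := by positivity
  rw [abs_le]
  constructor <;> linarith

theorem stmt17 (a b : ℝ) (ha : 0 < a) (hab : a < b) (s : ℝ) (hs : s ∈ Set.Ioo (0:ℝ) 1)
    (M : ℝ) (hM : 0 < M) (hbd : ∀ u ∈ Set.Icc a b, s * (1 - s) * u ^ (s - 2) ≤ M)
    (q : ℝ) (hq : 1 ≤ q) :
    (∀ x ∈ Set.Icc a b,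
        |(b ^ (s + 1) - a ^ (s + 1)) / ((s + 1) * (b - a)) - x ^ s + s * (x - ((a + b) / 2)) * x ^ (s - 1)|
          ≤ M * (3 * (s ^ 2 + 3 * s + 4) / ((s + 1) * (s + 2) * (s + 3))) ^ (1 / q) *
              ((b - a) ^ 2 / 24 + (1 / 2) * (x - ((a + b) / 2)) ^ 2))
      ∧ |(b ^ (s + 1) - a ^ (s + 1)) / ((s + 1) * (b - a)) - ((a + b) / 2) ^ s|
          ≤ M / 24 * (3 * (s ^ 2 + 3 * s + 4) / ((s + 1) * (s + 2) * (s + 3))) ^ (1 / q) * (b - a) ^ 2 := by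
  have hC : 1 ≤ (3 * (s ^ 2 + 3 * s + 4) / ((s + 1) * (s + 2) * (s + 3))) ^ (1 / q) := by
    obtain ⟨hs0, hs1⟩ := hs
    apply Real.one_le_rpow _ (by positivity)
    rw [le_div_iff₀ (by positivity)]
    have h2 : s ^ 2 ≤ 1 := by nlinarith
    have h3 : s ^ 3 ≤ 1 := by nlinarith
    nlinarith
  have key : ∀ x ∈ Set.Icc a b,
        |(b ^ (s + 1) - a ^ (s + 1)) / ((s + 1) * (b - a)) - x ^ s + s * (x - ((a + b) / 2)) * x ^ (s - 1)|
          ≤ M * (3 * (s ^ 2 + 3 * s + 4) / ((s + 1) * (s + 2) * (s + 3))) ^ (1 / q) *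
              ((b - a) ^ 2 / 24 + (1 / 2) * (x - ((a + b) / 2)) ^ 2) := by
    intro x hx
    refine (main_aux a b ha hab s hs M hbd x hx).trans ?_
    apply mul_le_mul_of_nonneg_right _ (by positivity)
    nlinarith
  refine ⟨key, ?_⟩
  have := key ((a + b) / 2) ⟨by linarith, by linarith⟩
  simp only [sub_self, mul_zero, zero_mul, add_zero] at this
  refine this.trans (le_of_eq ?_)
  ring
end
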